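/- arXiv:2110.10740 — 2 statements merged into one kernel-verified Lean document; each statement's English description precedes it below -/
import Mathlib

section
/- Let Φ : M → N be a morphism of matroids M = (X, I) and N = (Y, J), let ω : X → ℝ_{>0} be a positive weight function, and let k be an integer with 1 ≤ k < rk(M). Assume Φ has at least one basis of size k−1 and that p(k−1) ≥ 2, where p(k−1) = max{|Par(S)| : S a basis of Φ with |S| = k−1}. Then B_ω(k)² ≥ (1 + 1/k)·(1 + 1/(p(k−1) − 1))·B_ω(k−1)·B_ω(k+1). -/
open scoped Classical BigOperators

noncomputable section

/-- A (finite) matroid given by its independence predicate: a nonempty hereditary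
collection of independent sets satisfying the exchange property. -/
def IsMatroid {Z : Type*} [DecidableEq Z] (Indep : Finset Z → Prop) : Prop :=
  (∃ S : Finset Z, Indep S) ∧
    (∀ S T : Finset Z, S ⊆ T → Indep T → Indep S) ∧
    (∀ S T : Finset Z, Indep S → Indep T → S.card < T.card →
      ∃ x ∈ T, x ∉ S ∧ Indep (insert x S))

/-- The rank function of a set system: the maximal size of an independent subset. -/
def rkOf {Z : Type*} [DecidableEq Z] (Indep : Finset Z → Prop) (S : Finset Z) : ℕ :=
  S.powerset.sup (fun A => if Indep A then A.card else 0)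

variable {X Y : Type*} [Fintype X] [DecidableEq X] [Fintype Y] [DecidableEq Y]

/-- `Φ : X → Y` is a morphism of matroids from `M = (X, IndepM)` to `N = (Y, IndepN)` if
`g(Φ(T)) - g(Φ(S)) ≤ f(T) - f(S)` for all `S ⊆ T ⊆ X`, where `f`, `g` are the rank
functions of `M` and `N`. -/
def IsMorphism (IndepM : Finset X → Prop) (IndepN : Finset Y → Prop) (Φ : X → Y) : Prop :=
  ∀ S T : Finset X, S ⊆ T →
    (rkOf IndepN (T.image Φ) : ℤ) - (rkOf IndepN (S.image Φ) : ℤ) ≤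
      (rkOf IndepM T : ℤ) - (rkOf IndepM S : ℤ)

/-- A basis of the morphism `Φ`: an independent set of `M` whose image has full rank
in `N`. -/
def IsPhiBasis (IndepM : Finset X → Prop) (IndepN : Finset Y → Prop) (Φ : X → Y)
    (S : Finset X) : Prop :=
  IndepM S ∧ rkOf IndepN (S.image Φ) = rkOf IndepN (Finset.univ : Finset Y)

/-- The weighted count `B_ω(k)` of bases of `Φ` of size `k`. -/
def Bw (IndepM : Finset X → Prop) (IndepN : Finset Y → Prop) (Φ : X → Y)
    (ω : X → ℝ) (k : ℕ) : ℝ :=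
  ∑ S ∈ Finset.univ.filter (fun S : Finset X =>
      IsPhiBasis IndepM IndepN Φ S ∧ S.card = k),
    ∏ x ∈ S, ω x

/-- The set of continuations of an independent set `S` in `M`. -/
def mCont (IndepM : Finset X → Prop) (S : Finset X) : Finset X :=
  Finset.univ.filter (fun x => x ∉ S ∧ IndepM (insert x S))

/-- The parallel class of `x ∈ Cnt(S)` in `M`. -/
def mParClass (IndepM : Finset X → Prop) (S : Finset X) (x : X) : Finset X :=
  (mCont IndepM S).filter (fun y => y = x ∨ ¬ IndepM (insert y (insert x S)))

/-- The set `Par(S)` of parallel classes of `S` in `M`. -/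
def mParClasses (IndepM : Finset X → Prop) (S : Finset X) : Finset (Finset X) :=
  (mCont IndepM S).image (mParClass IndepM S)

/-- The `k`-continuation number of the morphism `Φ`: the maximal number of parallel
classes of a basis of `Φ` of size `k`. -/
def contNumB (IndepM : Finset X → Prop) (IndepN : Finset Y → Prop) (Φ : X → Y)
    (k : ℕ) : ℕ :=
  (Finset.univ.filter (fun S : Finset X =>
      IsPhiBasis IndepM IndepN Φ S ∧ S.card = k)).sup
    (fun S => (mParClasses IndepM S).card)

/-!
Homogenize the generating function of the bases of `Φ` to a form of degree `d = k + 1` in the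
variables `x i` and one further variable `y`: a basis `S` contributes `∏ i ∈ S, x i` times
`y ^ j / j!`, where `j = d - |S|` is at most `2`, with an extra factor `τ = 1 + 1 / (p - 1)` if
`j = 2`. This form is Lorentzian. Its support is M-convex by an exchange property for the bases of
`Φ`. Over a basis `S` of size `d - 2` its Hessian is the adjacency matrix of the complete
multipartite graph on the parallel classes of `S`, bordered by `y`; by the Cauchy–Schwarz inequality
over these `n ≤ p` classes it is hyperbolic if `n * (τ - 1) ≤ τ`, which leaves room for this `τ`.
Hyperbolicity passes from the derivatives of a form to the form itself by a Bochner-type argument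
for a weighted graph Laplacian. Differentiating `d - 2` times in the direction `ω` leaves a
quadratic form, whose reversed Cauchy–Schwarz inequality for `y` and `ω` is the claim.
-/

section HyperbolicForms

open Matrix

variable {V : Type*} [Fintype V]

/-- A real bilinear form satisfying the reversed Cauchy–Schwarz inequality against every vector on
which it is positive. For symmetric `H` this says that `H` has at most one positive eigenvalue. -/
def IsHyperbolicForm (H : Matrix V V ℝ) : Prop :=
  ∀ v w : V → ℝ, 0 < w ⬝ᵥ H *ᵥ w →
    (v ⬝ᵥ H *ᵥ v) * (w ⬝ᵥ H *ᵥ w) ≤ (v ⬝ᵥ H *ᵥ w) ^ 2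

lemma dotProduct_mulVec_comm_of_isSymm {R : Type*} [CommSemiring R] {H : Matrix V V R}
    (hH : H.IsSymm) (v w : V → R) : v ⬝ᵥ H *ᵥ w = w ⬝ᵥ H *ᵥ v := by
  rw [dotProduct_mulVec, ← mulVec_transpose, hH.eq, dotProduct_comm]

lemma sub_smul_dotProduct_mulVec_self {R : Type*} [CommRing R] {H : Matrix V V R}
    (hH : H.IsSymm) (v w : V → R) (s : R) :
    (v - s • w) ⬝ᵥ H *ᵥ (v - s • w) =
      v ⬝ᵥ H *ᵥ v - 2 * s * (v ⬝ᵥ H *ᵥ w) + s ^ 2 * (w ⬝ᵥ H *ᵥ w) := by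
  simp only [mulVec_sub, mulVec_smul, dotProduct_sub, sub_dotProduct, dotProduct_smul,
    smul_dotProduct, smul_eq_mul, dotProduct_mulVec_comm_of_isSymm hH w v]
  ring

lemma IsHyperbolicForm.of_nonpos_on_hyperplane {H : Matrix V V ℝ} (hH : H.IsSymm) (l : V → ℝ)
    (hl : ∀ v, l ⬝ᵥ v = 0 → v ⬝ᵥ H *ᵥ v ≤ 0) : IsHyperbolicForm H := by
  intro v w hw
  have hlw : l ⬝ᵥ w ≠ 0 := fun h => (hl w h).not_gt hw
  set s := (l ⬝ᵥ v) / (l ⬝ᵥ w) with hs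
  have hproj : l ⬝ᵥ (v - s • w) = 0 := by
    rw [dotProduct_sub, dotProduct_smul, smul_eq_mul, hs, div_mul_cancel₀ _ hlw, sub_self]
  have hneg := hl _ hproj
  rw [sub_smul_dotProduct_mulVec_self hH] at hneg
  nlinarith [sq_nonneg (v ⬝ᵥ H *ᵥ w - s * (w ⬝ᵥ H *ᵥ w)), mul_nonneg hw.le (neg_nonneg.mpr hneg)]

lemma IsHyperbolicForm.diagonal_scaling {H : Matrix V V ℝ} (hH : IsHyperbolicForm H) (d : V → ℝ) :
    IsHyperbolicForm (Matrix.of fun i j => d i * H i j * d j) := by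
  have hscale (v w : V → ℝ) :
      v ⬝ᵥ (Matrix.of fun i j => d i * H i j * d j) *ᵥ w = (d * v) ⬝ᵥ H *ᵥ (d * w) := by
    simp only [dotProduct, mulVec, of_apply, Pi.mul_apply, Finset.mul_sum]
    exact Finset.sum_congr rfl fun i _ => Finset.sum_congr rfl fun j _ => by ring
  intro v w
  simp only [hscale]
  exact hH (d * v) (d * w)

lemma exists_vecMul_eq_of_forall_mulVec_eq_zero {K m n : Type*} [Field K] [Fintype m] [Fintype n]
    (A : Matrix m n K) (y : n → K) (hy : ∀ w, A *ᵥ w = 0 → y ⬝ᵥ w = 0) :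
    ∃ c, c ᵥ* A = y := by
  have hspan : dotProductBilin K K y ∈
      Submodule.span K (Set.range fun i => dotProductBilin K K (A i)) := by
    refine mem_span_of_iInf_ker_le_ker fun w hw => ?_
    simp only [Submodule.mem_iInf, LinearMap.mem_ker, dotProductBilin_apply_apply] at hw ⊢
    exact hy w (funext hw)
  obtain ⟨c, hc⟩ := (Submodule.mem_span_range_iff_exists_fun K).1 hspan
  refine ⟨c, dotProduct_eq _ _ fun w => ?_⟩
  simpa [vecMul_eq_sum, sum_dotProduct] using congrArg (· w) hc

/-- The Laplacian of the graph with edge weights `H i j * x i * x j`, in the coordinates `v` for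
which `v i / x i` is the potential at `i`. -/
def weightedLaplacian (H : Matrix V V ℝ) (x : V → ℝ) : Matrix V V ℝ :=
  diagonal (H *ᵥ x / x) - H

lemma weightedLaplacian_mulVec (H : Matrix V V ℝ) (x v : V → ℝ) :
    weightedLaplacian H x *ᵥ v = H *ᵥ x / x * v - H *ᵥ v := by
  ext i
  simp [weightedLaplacian, sub_mulVec, mulVec_diagonal]

lemma weightedLaplacian_isSymm {H : Matrix V V ℝ} (hH : H.IsSymm) (x : V → ℝ) :
    (weightedLaplacian H x).IsSymm := by
  rw [IsSymm, weightedLaplacian, transpose_sub, diagonal_transpose, hH.eq]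

lemma two_mul_dotProduct_weightedLaplacian {H : Matrix V V ℝ} (hH : H.IsSymm) {x : V → ℝ}
    (hx : ∀ i, 0 < x i) (v : V → ℝ) :
    2 * (v ⬝ᵥ weightedLaplacian H x *ᵥ v) =
      ∑ i, ∑ j, H i j * x i * x j * (v i / x i - v j / x j) ^ 2 := by
  have hquad : v ⬝ᵥ weightedLaplacian H x *ᵥ v =
      ∑ i, ∑ j, H i j * (v i ^ 2 * x j / x i - v i * v j) := by
    rw [weightedLaplacian_mulVec]
    simp only [dotProduct, mulVec, Pi.sub_apply, Pi.mul_apply, Pi.div_apply, Finset.sum_div,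
      Finset.sum_mul, ← Finset.sum_sub_distrib, Finset.mul_sum]
    exact Finset.sum_congr rfl fun i _ => Finset.sum_congr rfl fun j _ => by ring
  have hquad_swap : v ⬝ᵥ weightedLaplacian H x *ᵥ v =
      ∑ i, ∑ j, H i j * (v j ^ 2 * x i / x j - v j * v i) := by
    rw [hquad, Finset.sum_comm]
    simp only [hH.apply]
  rw [two_mul]
  nth_rw 1 [hquad]
  rw [hquad_swap, ← Finset.sum_add_distrib]
  refine Finset.sum_congr rfl fun i _ => ?_
  rw [← Finset.sum_add_distrib]
  refine Finset.sum_congr rfl fun j _ => ?_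
  have := (hx i).ne'
  have := (hx j).ne'
  field_simp
  ring

lemma dotProduct_weightedLaplacian_nonneg {H : Matrix V V ℝ} (hH : H.IsSymm)
    (hH₀ : ∀ i j, 0 ≤ H i j) {x : V → ℝ} (hx : ∀ i, 0 < x i) (v : V → ℝ) :
    0 ≤ v ⬝ᵥ weightedLaplacian H x *ᵥ v := by
  have hsum : 0 ≤ ∑ i, ∑ j, H i j * x i * x j * (v i / x i - v j / x j) ^ 2 :=
    Finset.sum_nonneg fun i _ => Finset.sum_nonneg fun j _ =>
      mul_nonneg (mul_nonneg (mul_nonneg (hH₀ i j) (hx i).le) (hx j).le) (sq_nonneg _)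
  linarith [two_mul_dotProduct_weightedLaplacian hH hx v]

lemma div_eq_div_of_weightedLaplacian_mulVec_eq_zero {H : Matrix V V ℝ} (hH : H.IsSymm)
    (hH₀ : ∀ i j, 0 ≤ H i j) {x : V → ℝ} (hx : ∀ i, 0 < x i) {w : V → ℝ}
    (hw : weightedLaplacian H x *ᵥ w = 0) {i j : V} (hij : H i j ≠ 0) :
    w i / x i = w j / x j := by
  have hnonneg (i j : V) : 0 ≤ H i j * x i * x j * (w i / x i - w j / x j) ^ 2 :=
    mul_nonneg (mul_nonneg (mul_nonneg (hH₀ i j) (hx i).le) (hx j).le) (sq_nonneg _)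
  have hsum := two_mul_dotProduct_weightedLaplacian hH hx w
  rw [hw, dotProduct_zero, mul_zero, eq_comm,
    Finset.sum_eq_zero_iff_of_nonneg fun i _ => Finset.sum_nonneg fun j _ => hnonneg i j] at hsum
  have hedge := (Finset.sum_eq_zero_iff_of_nonneg fun j _ => hnonneg i j).1
    (hsum i (Finset.mem_univ i)) j (Finset.mem_univ j)
  simpa [hij, (hx i).ne', (hx j).ne', sub_eq_zero] using hedge

lemma eq_zero_of_mulVec_eq_zero_of_pos {m : Type*} {A : Matrix m V ℝ} (hA : ∀ i j, 0 ≤ A i j)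
    {x : V → ℝ} (hx : ∀ j, 0 < x j) {i : m} (hi : (A *ᵥ x) i = 0) (j : V) : A i j = 0 := by
  have hterm := (Finset.sum_eq_zero_iff_of_nonneg
    fun j _ => mul_nonneg (hA i j) (hx j).le).1 hi j (Finset.mem_univ j)
  exact (mul_eq_zero.1 hterm).resolve_right (hx j).ne'

/-- The Bochner-type inequality to which the hyperbolicity of the local forms `K i` amounts. At
rows with `(H *ᵥ x) i = 0` the summand on the right is `0` by the convention `x i / 0 = 0`. -/
lemma dotProduct_mulVec_le_of_local {H : Matrix V V ℝ} {K : V → Matrix V V ℝ} {x : V → ℝ}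
    (hx : ∀ i, 0 < x i) (hK₀ : ∀ i a b, 0 ≤ K i a b) (hK : ∀ i, IsHyperbolicForm (K i))
    (hsum : ∑ i, x i • K i = H) (hrow : ∀ i, K i *ᵥ x = H i) (v : V → ℝ) :
    v ⬝ᵥ H *ᵥ v ≤ ∑ i, x i / (H *ᵥ x) i * (H *ᵥ v) i ^ 2 := by
  have hdecomp : v ⬝ᵥ H *ᵥ v = ∑ i, x i * (v ⬝ᵥ K i *ᵥ v) := by
    rw [← hsum, sum_mulVec, dotProduct_sum]
    simp only [smul_mulVec, dotProduct_smul, smul_eq_mul]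
  rw [hdecomp]
  refine Finset.sum_le_sum fun i _ => ?_
  have hvKx (v : V → ℝ) : v ⬝ᵥ K i *ᵥ x = (H *ᵥ v) i := by
    rw [hrow, dotProduct_comm]; rfl
  have hnonneg : 0 ≤ x ⬝ᵥ K i *ᵥ x :=
    dotProduct_nonneg_of_nonneg (fun j => (hx j).le) fun a =>
      Finset.sum_nonneg fun b _ => mul_nonneg (hK₀ i a b) (hx b).le
  rcases hnonneg.eq_or_lt with hzero | hpos
  · have hHx : (H *ᵥ x) i = 0 := by rw [← hvKx, ← hzero]
    have hKi : K i = 0 := by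
      ext a b
      refine eq_zero_of_mulVec_eq_zero_of_pos (hK₀ i) hx ?_ b
      rw [hrow]
      exact eq_zero_of_mulVec_eq_zero_of_pos (fun i a => hrow i ▸
        Finset.sum_nonneg fun b _ => mul_nonneg (hK₀ i a b) (hx b).le) hx hHx a
    simp [hKi, hHx]
  · have hrev := hK i v x hpos
    rw [hvKx v, hvKx x] at hrev
    rw [hvKx x] at hpos
    rw [div_mul_eq_mul_div, mul_div_assoc]
    exact mul_le_mul_of_nonneg_left ((le_div_iff₀ hpos).2 hrev) (hx i).le

lemma exists_weightedLaplacian_mulVec_eq {H : Matrix V V ℝ} (hH : H.IsSymm)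
    (hH₀ : ∀ i j, 0 ≤ H i j) {x : V → ℝ} (hx : ∀ i, 0 < x i)
    (hconn : ∀ f : V → ℝ, (∀ i j, H i j ≠ 0 → f i = f j) →
      ∀ i j, H i ≠ 0 → H j ≠ 0 → f i = f j)
    {v : V → ℝ} (hv : H *ᵥ x ⬝ᵥ v = 0) :
    ∃ w, weightedLaplacian H x *ᵥ w = H *ᵥ x / x * v := by
  suffices hker : ∀ w, weightedLaplacian H x *ᵥ w = 0 → (H *ᵥ x / x * v) ⬝ᵥ w = 0 by
    obtain ⟨w, hw⟩ := exists_vecMul_eq_of_forall_mulVec_eq_zero _ _ hker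
    exact ⟨w, by rw [← hw, ← mulVec_transpose, (weightedLaplacian_isSymm hH x).eq]⟩
  intro w hw
  have hconst : ∃ c, ∀ i, H i ≠ 0 → w i / x i = c := by
    by_cases hne : ∃ i, H i ≠ 0
    · obtain ⟨i₀, hi₀⟩ := hne
      exact ⟨w i₀ / x i₀, fun i hi => hconn (fun i => w i / x i) (fun _ _ =>
        div_eq_div_of_weightedLaplacian_mulVec_eq_zero hH hH₀ hx hw) i i₀ hi hi₀⟩
    · exact ⟨0, fun i hi => absurd ⟨i, hi⟩ hne⟩
  obtain ⟨c, hc⟩ := hconst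
  calc (H *ᵥ x / x * v) ⬝ᵥ w
      = ∑ i, c * ((H *ᵥ x) i * v i) := Finset.sum_congr rfl fun i _ => by
        by_cases hi : H i = 0
        · simp [mulVec, hi]
        · rw [← hc i hi, Pi.mul_apply, Pi.div_apply]; ring
    _ = 0 := by rw [← Finset.mul_sum, ← dotProduct, hv, mul_zero]

/-- Solving `L *ᵥ w = D *ᵥ v`, with `L` the Laplacian and `D = H + L` its diagonal part, turns the
local inequality at `w` into `w ⬝ᵥ L *ᵥ w ≤ v ⬝ᵥ D *ᵥ v`; positivity of `L` at `v - w` then gives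
`v ⬝ᵥ D *ᵥ v ≤ v ⬝ᵥ L *ᵥ v`. -/
theorem IsHyperbolicForm.of_local {H : Matrix V V ℝ} {K : V → Matrix V V ℝ} {x : V → ℝ}
    (hH : H.IsSymm) (hH₀ : ∀ i j, 0 ≤ H i j) (hx : ∀ i, 0 < x i)
    (hK₀ : ∀ i a b, 0 ≤ K i a b) (hK : ∀ i, IsHyperbolicForm (K i))
    (hsum : ∑ i, x i • K i = H) (hrow : ∀ i, K i *ᵥ x = H i)
    (hconn : ∀ f : V → ℝ, (∀ i j, H i j ≠ 0 → f i = f j) →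
      ∀ i j, H i ≠ 0 → H j ≠ 0 → f i = f j) : IsHyperbolicForm H := by
  refine of_nonpos_on_hyperplane hH (H *ᵥ x) fun v hv => ?_
  obtain ⟨w, hw⟩ := exists_weightedLaplacian_mulVec_eq hH hH₀ hx hconn hv
  set L := weightedLaplacian H x with hL
  set d : V → ℝ := H *ᵥ x / x with hd
  have hHmul (u : V → ℝ) : H *ᵥ u = d * u - L *ᵥ u := by
    rw [hL, weightedLaplacian_mulVec, sub_sub_cancel]
  have hHw : H *ᵥ w = d * (w - v) := by rw [hHmul, hw, mul_sub]
  have hlocal : w ⬝ᵥ (d * (w - v)) ≤ (w - v) ⬝ᵥ (d * (w - v)) := by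
    refine hHw ▸ (dotProduct_mulVec_le_of_local hx hK₀ hK hsum hrow w).trans_eq ?_
    refine Finset.sum_congr rfl fun i _ => ?_
    rw [hHw]
    have := (hx i).ne'
    rcases eq_or_ne ((H *ᵥ x) i) 0 with hi | hi
    · simp [hd, hi]
    · simp only [hd, Pi.mul_apply, Pi.div_apply, Pi.sub_apply]; field_simp
  have hwLw : w ⬝ᵥ L *ᵥ w ≤ v ⬝ᵥ L *ᵥ w := by
    have hdw : v ⬝ᵥ (d * w) = w ⬝ᵥ L *ᵥ w := by
      rw [hw]
      exact Finset.sum_congr rfl fun i _ => by simp only [Pi.mul_apply]; ring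
    rw [sub_dotProduct, mul_sub, dotProduct_sub v, hdw, ← hw] at hlocal
    linarith
  have hpos := dotProduct_weightedLaplacian_nonneg hH hH₀ hx (v - (1 : ℝ) • w)
  rw [← hL, sub_smul_dotProduct_mulVec_self (weightedLaplacian_isSymm hH x)] at hpos
  rw [hHmul, dotProduct_sub, ← hw]
  linarith

end HyperbolicForms

section CompleteMultipartite

open Matrix

variable {V α : Type*}

lemma sum_sum_ite_eq_zero_eq_sq_sub [DecidableEq α] (G : Finset V) (κ : V → α) (v : V → ℝ) :
    ∑ i ∈ G, ∑ j ∈ G, (if κ i = κ j then 0 else v i * v j) =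
      (∑ i ∈ G, v i) ^ 2 - ∑ c ∈ G.image κ, (∑ i ∈ G with κ i = c, v i) ^ 2 := by
  have hsplit (i j : V) : (if κ i = κ j then 0 else v i * v j) =
      v i * v j - v i * if κ j = κ i then v j else 0 := by
    simp only [eq_comm (a := κ j)]
    split_ifs <;> ring
  simp only [hsplit, Finset.sum_sub_distrib, ← Finset.mul_sum, ← Finset.sum_mul,
    ← Finset.sum_filter, ← sq]
  congr 1
  rw [← Finset.sum_fiberwise_of_maps_to fun i => Finset.mem_image_of_mem κ]
  refine Finset.sum_congr rfl fun c _ => ?_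
  rw [sq, Finset.sum_mul]
  exact Finset.sum_congr rfl fun i hi => by rw [(Finset.mem_filter.1 hi).2]

lemma sq_sum_le_card_image_mul_sum_sq [DecidableEq α] (G : Finset V) (κ : V → α) (v : V → ℝ) :
    (∑ i ∈ G, v i) ^ 2 ≤
      (G.image κ).card * ∑ c ∈ G.image κ, (∑ i ∈ G with κ i = c, v i) ^ 2 := by
  rw [← Finset.sum_fiberwise_of_maps_to fun i => Finset.mem_image_of_mem κ]
  exact sq_sum_le_card_mul_sum_sq

/-- The adjacency matrix of the complete multipartite graph on `G` whose parts are the fibres of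
`κ`, with the vertices outside `G` isolated. -/
def multipartiteMatrix (G : Finset V) (κ : V → α) : Matrix V V ℝ :=
  Matrix.of fun i j => if i ∈ G ∧ j ∈ G ∧ κ i ≠ κ j then 1 else 0

/-- The matrix `M` bordered by a row and a column, both indexed by `none`, which carry `τ` on the
diagonal and the indicator of `G` elsewhere. -/
def borderedMatrix (τ : ℝ) (G : Finset V) (M : Matrix V V ℝ) : Matrix (Option V) (Option V) ℝ :=
  Matrix.of fun
    | none, none => τ
    | none, some j => if j ∈ G then 1 else 0
    | some i, none => if i ∈ G then 1 else 0
    | some i, some j => M i j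

lemma multipartiteMatrix_isSymm (G : Finset V) (κ : V → α) : (multipartiteMatrix G κ).IsSymm := by
  refine IsSymm.ext fun i j => if_congr ?_ rfl rfl
  rw [ne_comm, and_left_comm]

lemma borderedMatrix_isSymm (τ : ℝ) (G : Finset V) {M : Matrix V V ℝ} (hM : M.IsSymm) :
    (borderedMatrix τ G M).IsSymm := by
  refine IsSymm.ext ?_
  rintro (_ | i) (_ | j)
  · rfl
  · rfl
  · rfl
  · exact hM.apply i j

lemma exists_eq_multipartiteMatrix [Finite V] {R : V → V → Prop}
    (hsymm : ∀ i j, R i j → R j i) (hirrefl : ∀ i, ¬ R i i)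
    (hR : ∀ i j z w, R i j → R z w → R z i ∨ R z j) :
    ∃ G : Finset V, (Matrix.of fun i j => if R i j then (1 : ℝ) else 0) =
      multipartiteMatrix G fun i => {j | R i j} := by
  refine ⟨(Set.toFinite {i | ∃ j, R i j}).toFinset, ?_⟩
  ext i j
  refine if_congr ?_ rfl rfl
  simp only [Set.Finite.mem_toFinset, Set.mem_ofPred_eq]
  refine ⟨fun hij => ⟨⟨j, hij⟩, ⟨i, hsymm i j hij⟩, fun h => ?_⟩, ?_⟩
  · have hjj : j ∈ {k | R j k} := h ▸ hij
    exact hirrefl j hjj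
  · rintro ⟨⟨k, hik⟩, ⟨l, hjl⟩, hne⟩
    by_contra hij
    refine hne (Set.ext fun z => ⟨fun hiz => ?_, fun hjz => ?_⟩)
    · exact (hR i z j l hiz hjl).resolve_left fun hji => hij (hsymm j i hji)
    · exact (hR j z i k hjz hik).resolve_left hij

variable [Fintype V]

lemma dotProduct_multipartiteMatrix [DecidableEq α] (G : Finset V) (κ : V → α) (v : V → ℝ) :
    v ⬝ᵥ multipartiteMatrix G κ *ᵥ v =
      (∑ i ∈ G, v i) ^ 2 - ∑ c ∈ G.image κ, (∑ i ∈ G with κ i = c, v i) ^ 2 := by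
  rw [← sum_sum_ite_eq_zero_eq_sq_sub, ← Fintype.sum_ite_mem]
  refine Finset.sum_congr rfl fun i _ => ?_
  rw [← Fintype.sum_ite_mem, mulVec, dotProduct, Finset.mul_sum]
  by_cases hi : i ∈ G
  · rw [if_pos hi]
    refine Finset.sum_congr rfl fun j _ => ?_
    by_cases hj : j ∈ G <;> by_cases hij : κ i = κ j <;> simp [multipartiteMatrix, hi, hj, hij]
  · simp [multipartiteMatrix, hi]

lemma isHyperbolicForm_multipartiteMatrix (G : Finset V) (κ : V → α) :
    IsHyperbolicForm (multipartiteMatrix G κ) := by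
  refine .of_nonpos_on_hyperplane (multipartiteMatrix_isSymm G κ) (fun i => if i ∈ G then 1 else 0)
    fun v hv => ?_
  simp only [dotProduct, ite_mul, one_mul, zero_mul, Fintype.sum_ite_mem] at hv
  rw [dotProduct_multipartiteMatrix, hv]
  have : 0 ≤ ∑ c ∈ G.image κ, (∑ i ∈ G with κ i = c, v i) ^ 2 := by positivity
  linarith

lemma dotProduct_borderedMatrix (τ : ℝ) (G : Finset V) (M : Matrix V V ℝ) (v : Option V → ℝ) :
    v ⬝ᵥ borderedMatrix τ G M *ᵥ v =
      τ * v none ^ 2 + 2 * v none * ∑ i ∈ G, v (some i) +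
        (v ∘ some) ⬝ᵥ M *ᵥ (v ∘ some) := by
  simp only [dotProduct, mulVec, borderedMatrix, of_apply, Fintype.sum_option, ite_mul, one_mul,
    zero_mul, Fintype.sum_ite_mem, mul_add, Finset.sum_add_distrib, mul_ite, mul_zero,
    Function.comp_apply, ← Finset.sum_mul]
  ring

lemma isHyperbolicForm_borderedMatrix_multipartiteMatrix [DecidableEq α] {τ : ℝ} (hτ : 1 ≤ τ)
    {G : Finset V} {κ : V → α} (hcard : ((G.image κ).card : ℝ) * (τ - 1) ≤ τ) :
    IsHyperbolicForm (borderedMatrix τ G (multipartiteMatrix G κ)) := by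
  refine .of_nonpos_on_hyperplane (borderedMatrix_isSymm τ G (multipartiteMatrix_isSymm G κ))
    (fun i => i.elim τ fun i => if i ∈ G then 1 else 0) fun v hv => ?_
  simp only [dotProduct, Fintype.sum_option, Option.elim, ite_mul, one_mul, zero_mul,
    Fintype.sum_ite_mem] at hv
  rw [dotProduct_borderedMatrix, dotProduct_multipartiteMatrix]
  have hcauchy := sq_sum_le_card_image_mul_sum_sq G κ (v ∘ some)
  simp only [Function.comp_apply] at hcauchy ⊢
  set s := ∑ i ∈ G, v (some i)
  set Q := ∑ c ∈ G.image κ, (∑ i ∈ G with κ i = c, v (some i)) ^ 2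
  have hQ₀ : 0 ≤ Q := by positivity
  have hs_eq : s = -(τ * v none) := by linarith
  have hbound : (τ - 1) * s ^ 2 ≤ τ * Q := by nlinarith [mul_le_mul_of_nonneg_right hcard hQ₀]
  have hdiag : τ * ((τ - 1) * τ * v none ^ 2) ≤ τ * Q := by rw [hs_eq] at hbound; linarith
  rw [hs_eq]
  linarith [le_of_mul_le_mul_left hdiag (by linarith)]

lemma isHyperbolicForm_of_adj_or_adj {R : V → V → Prop} (hsymm : ∀ i j, R i j → R j i)
    (hirrefl : ∀ i, ¬ R i i) (hR : ∀ i j z w, R i j → R z w → R z i ∨ R z j) :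
    IsHyperbolicForm (Matrix.of fun i j => if R i j then (1 : ℝ) else 0) := by
  obtain ⟨G, hG⟩ := exists_eq_multipartiteMatrix hsymm hirrefl hR
  exact hG ▸ isHyperbolicForm_multipartiteMatrix G _

end CompleteMultipartite

section Lorentzian

open Matrix

variable {V : Type*}

/-- The Hessian, at the coefficient indexed by `α`, of the form with coefficient function `q`; see
`IsLorentzian`. -/
def hessian (q : Multiset V → ℝ) (α : Multiset V) : Matrix V V ℝ :=
  Matrix.of fun i j => q (i ::ₘ j ::ₘ α)

lemma hessian_isSymm (q : Multiset V → ℝ) (α : Multiset V) : (hessian q α).IsSymm :=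
  IsSymm.ext fun i j => congrArg q (Multiset.cons_swap j i α)

lemma exists_count_lt_count [DecidableEq V] {a b : Multiset V} (hcard : a.card = b.card) {k : V}
    (hk : b.count k < a.count k) : ∃ l, a.count l < b.count l := by
  by_contra! hle
  have hab : b = a := Multiset.eq_of_le_of_card_le (Multiset.le_iff_count.2 hle) hcard.le
  exact hk.ne (by rw [hab])

/-- The multisets of size `d` in the support of `q` form an M-convex set: they satisfy the exchange
property. -/
def HasMConvexSupport [DecidableEq V] (q : Multiset V → ℝ) (d : ℕ) : Prop :=
  ∀ γ δ : Multiset V, γ.card = d → δ.card = d → 0 < q γ → 0 < q δ →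
    ∀ i, δ.count i < γ.count i → ∃ j, γ.count j < δ.count j ∧ 0 < q (i ::ₘ δ.erase j)

lemma HasMConvexSupport.pos_or_pos [DecidableEq V] {q : Multiset V → ℝ} {α : Multiset V}
    (hq : HasMConvexSupport q (α.card + 2))
    (i j z w : V) (hij : 0 < q (i ::ₘ j ::ₘ α)) (hzw : 0 < q (z ::ₘ w ::ₘ α)) :
    0 < q (z ::ₘ i ::ₘ α) ∨ 0 < q (z ::ₘ j ::ₘ α) := by
  rcases eq_or_ne z i with rfl | hzi
  · exact .inr hij
  rcases eq_or_ne z j with rfl | hzj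
  · exact .inl (Multiset.cons_swap i z α ▸ hij)
  have hcount : (i ::ₘ j ::ₘ α).count z < (z ::ₘ w ::ₘ α).count z := by
    rw [Multiset.count_cons_of_ne hzi, Multiset.count_cons_of_ne hzj, Multiset.count_cons_self]
    exact Nat.lt_succ_of_le (Multiset.count_le_count_cons z w α)
  obtain ⟨u, hu, hpos⟩ := hq _ (i ::ₘ j ::ₘ α) (by simp) (by simp) hzw hij z hcount
  have huij : u = i ∨ u = j := by
    by_contra! hne
    rw [Multiset.count_cons_of_ne hne.1, Multiset.count_cons_of_ne hne.2] at hu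
    exact hu.not_ge <|
      (Multiset.count_le_count_cons u w α).trans (Multiset.count_le_count_cons u z _)
  rcases huij with rfl | rfl
  · exact .inr (by simpa using hpos)
  · exact .inl (by simpa [Multiset.cons_swap i u] using hpos)

/-- The degree of `q` is one more than that of `a` and `b`: the supports of the derivatives of `q`
again satisfy the exchange property. -/
lemma HasMConvexSupport.exchange_of_exists_cons_pos [DecidableEq V] {q : Multiset V → ℝ} {d : ℕ}
    (hq : HasMConvexSupport q (d + 1))
    {a b : Multiset V} (ha : a.card = d) (hb : b.card = d) (hqa : ∃ i, 0 < q (i ::ₘ a))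
    (hqb : ∃ j, 0 < q (j ::ₘ b)) {k : V} (hk : b.count k < a.count k) :
    ∃ u, a.count u < b.count u ∧ ∃ l, 0 < q (l ::ₘ k ::ₘ b.erase u) := by
  obtain ⟨i, hi⟩ := hqa
  obtain ⟨j, hj⟩ := hqb
  have hdone (hkb : 0 < q (k ::ₘ b)) :
      ∃ u, a.count u < b.count u ∧ ∃ l, 0 < q (l ::ₘ k ::ₘ b.erase u) := by
    obtain ⟨l, hl⟩ := exists_count_lt_count (ha.trans hb.symm) hk
    refine ⟨l, hl, l, ?_⟩
    rwa [Multiset.cons_swap, Multiset.cons_erase (Multiset.count_pos.1 (Nat.zero_lt_of_lt hl))]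
  rcases eq_or_ne k j with rfl | hkj
  · exact hdone hj
  have hk' : (j ::ₘ b).count k < (i ::ₘ a).count k := by
    rw [Multiset.count_cons_of_ne hkj]
    exact hk.trans_le (Multiset.count_le_count_cons k i a)
  obtain ⟨u, hu, hpos⟩ := hq _ _ (by simp [ha]) (by simp [hb]) hi hj k hk'
  rcases eq_or_ne u j with rfl | huj
  · exact hdone (by simpa using hpos)
  · rw [Multiset.count_cons_of_ne huj] at hu
    refine ⟨u, (Multiset.count_le_count_cons u i a).trans_lt hu, j, ?_⟩
    rwa [Multiset.cons_swap, ← Multiset.erase_cons_tail b huj.symm]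

variable [Fintype V]

/-- The coefficient function of the derivative in the direction `x` of the form with coefficient
function `q`. -/
def contract (x : V → ℝ) (q : Multiset V → ℝ) (α : Multiset V) : ℝ :=
  ∑ i, x i * q (i ::ₘ α)

/-- The form `∑ γ, q γ * x ^ γ / γ!` of degree `d` is Lorentzian: its coefficients are nonnegative,
their support is M-convex, and its derivatives of order `d - 2` are hyperbolic. A monomial is
encoded by the multiset of its variables, so that partial derivatives only shift `q`. -/
structure IsLorentzian [DecidableEq V] (q : Multiset V → ℝ) (d : ℕ) : Prop where
  nonneg : ∀ γ, 0 ≤ q γ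
  mConvex : HasMConvexSupport q d
  hyperbolic : ∀ α : Multiset V, α.card + 2 = d → IsHyperbolicForm (hessian q α)

lemma contract_pos_iff {x : V → ℝ} (hx : ∀ i, 0 < x i) {q : Multiset V → ℝ} (hq : ∀ γ, 0 ≤ q γ)
    (α : Multiset V) : 0 < contract x q α ↔ ∃ i, 0 < q (i ::ₘ α) := by
  have hterm (i : V) : 0 ≤ x i * q (i ::ₘ α) := mul_nonneg (hx i).le (hq _)
  rw [contract, Finset.sum_pos_iff_of_nonneg fun i _ => hterm i]
  simp [hx]

lemma isHyperbolicForm_hessian_contract {x : V → ℝ} (hx : ∀ i, 0 < x i) {q : Multiset V → ℝ}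
    (hq : ∀ γ, 0 ≤ q γ) (α : Multiset V) (hhess : ∀ l, IsHyperbolicForm (hessian q (l ::ₘ α)))
    (hadj : ∀ i j z w, 0 < contract x q (i ::ₘ j ::ₘ α) → 0 < contract x q (z ::ₘ w ::ₘ α) →
      0 < contract x q (z ::ₘ i ::ₘ α) ∨ 0 < contract x q (z ::ₘ j ::ₘ α)) :
    IsHyperbolicForm (hessian (contract x q) α) := by
  have hnonneg (i j : V) : 0 ≤ hessian (contract x q) α i j :=
    Finset.sum_nonneg fun l _ => mul_nonneg (hx l).le (hq _)
  refine .of_local (K := fun l => hessian q (l ::ₘ α)) (hessian_isSymm _ α) hnonneg hx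
    (fun l a b => hq _) hhess ?_ ?_ ?_
  · ext i j
    simp only [Matrix.sum_apply, Matrix.smul_apply, hessian, of_apply, contract, smul_eq_mul]
    exact Finset.sum_congr rfl fun l _ => by
      rw [Multiset.cons_swap j, Multiset.cons_swap i]
  · intro i
    ext j
    simp only [hessian, mulVec, dotProduct, of_apply, contract]
    exact Finset.sum_congr rfl fun l _ => by
      rw [mul_comm, Multiset.cons_swap l i, Multiset.cons_swap j i, Multiset.cons_swap j l,
        Multiset.cons_swap l i]
  · intro f hf i z hi hz
    have hedge {i j : V} (hij : 0 < contract x q (i ::ₘ j ::ₘ α)) : f i = f j := hf i j hij.ne'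
    obtain ⟨j, hij⟩ := Function.ne_iff.1 hi
    obtain ⟨w, hzw⟩ := Function.ne_iff.1 hz
    have hij := (hnonneg i j).lt_of_ne' hij
    rcases hadj i j z w hij ((hnonneg z w).lt_of_ne' hzw) with hzi | hzj
    · exact (hedge hzi).symm
    · exact (hedge hij).trans (hedge hzj).symm

lemma continuous_iterate_contract (q : Multiset V → ℝ) (m : ℕ) (γ : Multiset V) :
    Continuous fun x : V → ℝ => (contract x)^[m] q γ := by
  induction m generalizing γ with
  | zero => exact continuous_const
  | succ m ih =>
    simp only [Function.iterate_succ_apply', contract]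
    exact continuous_finsetSum _ fun i _ => (continuous_apply i).mul (ih _)

variable [DecidableEq V]

lemma isLorentzian_contract {q : Multiset V → ℝ} {d : ℕ} (hq : IsLorentzian q (d + 1)) {x : V → ℝ}
    (hx : ∀ i, 0 < x i) : IsLorentzian (contract x q) d := by
  have hpos := contract_pos_iff hx hq.nonneg
  have hmconvex : HasMConvexSupport (contract x q) d := fun a b ha hb hqa hqb k hk => by
    simp only [hpos] at hqa hqb ⊢
    exact hq.mConvex.exchange_of_exists_cons_pos ha hb hqa hqb hk
  refine ⟨fun γ => Finset.sum_nonneg fun i _ => mul_nonneg (hx i).le (hq.nonneg _), hmconvex, ?_⟩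
  rintro α rfl
  exact isHyperbolicForm_hessian_contract hx hq.nonneg α
    (fun l => hq.hyperbolic (l ::ₘ α) (by rw [Multiset.card_cons]))
    hmconvex.pos_or_pos

lemma isLorentzian_iterate_contract {q : Multiset V → ℝ} {d m : ℕ} (hq : IsLorentzian q (d + m))
    {x : V → ℝ} (hx : ∀ i, 0 < x i) : IsLorentzian ((contract x)^[m] q) d := by
  induction m generalizing q with
  | zero => exact hq
  | succ m ih => exact ih (isLorentzian_contract hq hx)

lemma IsLorentzian.pair_mul_contract_contract_le_sq {q : Multiset V → ℝ} (hq : IsLorentzian q 2)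
    {x : V → ℝ} (o : V) :
    q {o, o} * contract x (contract x q) 0 ≤ (contract x q {o}) ^ 2 := by
  have hoo : Pi.single o 1 ⬝ᵥ hessian q 0 *ᵥ Pi.single o 1 = q {o, o} := by
    rw [single_one_dotProduct, mulVec_single_one]; rfl
  have hox : Pi.single o 1 ⬝ᵥ hessian q 0 *ᵥ x = contract x q {o} := by
    rw [single_one_dotProduct]
    exact Finset.sum_congr rfl fun i _ => by
      rw [mul_comm]; exact congrArg (x i * q ·) (Multiset.cons_swap o i 0)
  have hxx : x ⬝ᵥ hessian q 0 *ᵥ x = contract x (contract x q) 0 :=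
    Finset.sum_congr rfl fun i _ => congrArg (x i * ·) <| Finset.sum_congr rfl fun j _ => by
      rw [mul_comm]; exact congrArg (x j * q ·) (Multiset.cons_swap i j 0)
  rcases le_or_gt (contract x (contract x q) 0) 0 with hle | hlt
  · exact (mul_nonpos_of_nonneg_of_nonpos (hq.nonneg _) hle).trans (sq_nonneg _)
  · rw [← hxx, ← hoo, ← hox]
    exact hq.hyperbolic 0 rfl _ _ (hxx ▸ hlt)

theorem IsLorentzian.iterate_contract_pair_mul_le_sq {q : Multiset V → ℝ} {m : ℕ}
    (hq : IsLorentzian q (m + 2)) {x : V → ℝ} (hx : ∀ i, 0 ≤ x i) (o : V) :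
    (contract x)^[m] q {o, o} * (contract x)^[m + 2] q 0 ≤
      ((contract x)^[m + 1] q {o}) ^ 2 := by
  have hclosed : IsClosed {x : V → ℝ | (contract x)^[m] q {o, o} *
      (contract x)^[m + 2] q 0 ≤ ((contract x)^[m + 1] q {o}) ^ 2} :=
    isClosed_le ((continuous_iterate_contract q m _).mul (continuous_iterate_contract q _ _))
      ((continuous_iterate_contract q _ _).pow 2)
  refine closure_minimal (s := Set.univ.pi fun _ => Set.Ioi 0) (fun x hx => ?_) hclosed ?_
  · rw [add_comm] at hq
    simp only [Set.mem_ofPred_eq, Function.iterate_succ_apply']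
    have hlor := isLorentzian_iterate_contract hq fun i => hx i trivial
    exact hlor.pair_mul_contract_contract_le_sq o
  · rw [closure_pi_set]
    exact fun i _ => by rw [closure_Ioi]; exact hx i

end Lorentzian

section Rank

variable {V : Type*} [DecidableEq V] {Ind : Finset V → Prop} {S T A : Finset V}

lemma card_le_rkOf (hAS : A ⊆ S) (hA : Ind A) : A.card ≤ rkOf Ind S := by
  have hsup := Finset.le_sup (f := fun A => if Ind A then A.card else 0)
    (Finset.mem_powerset.2 hAS)
  rwa [if_pos hA] at hsup

lemma rkOf_le_iff {n : ℕ} : rkOf Ind S ≤ n ↔ ∀ A ⊆ S, Ind A → A.card ≤ n := by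
  refine ⟨fun h A hAS hA => (card_le_rkOf hAS hA).trans h, fun h => Finset.sup_le fun A hAS => ?_⟩
  split_ifs with hA
  · exact h A (Finset.mem_powerset.1 hAS) hA
  · exact Nat.zero_le n

lemma rkOf_mono (hST : S ⊆ T) : rkOf Ind S ≤ rkOf Ind T :=
  rkOf_le_iff.2 fun _ hAS hA => card_le_rkOf (hAS.trans hST) hA

lemma rkOf_le_card : rkOf Ind S ≤ S.card :=
  rkOf_le_iff.2 fun _ hAS _ => Finset.card_le_card hAS

lemma rkOf_eq_card (hS : Ind S) : rkOf Ind S = S.card :=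
  le_antisymm rkOf_le_card (card_le_rkOf subset_rfl hS)

namespace IsMatroid

variable (hM : IsMatroid Ind)
include hM

lemma indep_subset (hT : Ind T) (hST : S ⊆ T) : Ind S :=
  hM.2.1 S T hST hT

lemma indep_empty : Ind ∅ :=
  hM.1.elim fun _ hS => hM.indep_subset hS (Finset.empty_subset _)

lemma exists_insert_indep (hS : Ind S) (hT : Ind T) (hcard : S.card < T.card) :
    ∃ x ∈ T, x ∉ S ∧ Ind (insert x S) :=
  hM.2.2 S T hS hT hcard

lemma exists_indep_superset_card_eq_rkOf (hA : Ind A) (hAT : A ⊆ T) :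
    ∃ D, A ⊆ D ∧ D ⊆ T ∧ Ind D ∧ D.card = rkOf Ind T := by
  have hne : (T.powerset.filter fun D => A ⊆ D ∧ Ind D).Nonempty := ⟨A, by simp [hAT, hA]⟩
  obtain ⟨D, hD, hmax⟩ := Finset.exists_max_image _ Finset.card hne
  simp only [Finset.mem_filter, Finset.mem_powerset] at hD hmax
  obtain ⟨hDT, hAD, hDind⟩ := hD
  refine ⟨D, hAD, hDT, hDind,
    (card_le_rkOf hDT hDind).antisymm (rkOf_le_iff.2 fun E hET hE => ?_)⟩
  by_contra! hlt
  obtain ⟨x, hxE, hxD, hins⟩ := hM.exists_insert_indep hDind hE hlt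
  have := hmax (insert x D) ⟨Finset.insert_subset (hET hxE) hDT,
    hAD.trans (Finset.subset_insert _ _), hins⟩
  rw [Finset.card_insert_of_notMem hxD] at this
  lia

lemma rkOf_insert_eq_of_subset {x : V} (hST : S ⊆ T) (hx : rkOf Ind (insert x S) = rkOf Ind S) :
    rkOf Ind (insert x T) = rkOf Ind T := by
  refine le_antisymm ?_ (rkOf_mono (Finset.subset_insert _ _))
  obtain ⟨A, -, hAS, hA, hAcard⟩ :=
    hM.exists_indep_superset_card_eq_rkOf hM.indep_empty (Finset.empty_subset S)
  obtain ⟨D, hAD, hDT, hD, hDcard⟩ := hM.exists_indep_superset_card_eq_rkOf hA (hAS.trans hST)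
  refine rkOf_le_iff.2 fun E hE hEind => ?_
  by_contra! hlt
  obtain ⟨z, hzE, hzD, hins⟩ := hM.exists_insert_indep hD hEind (hDcard.trans_lt hlt)
  rcases Finset.mem_insert.1 (hE hzE) with rfl | hzT
  · have := card_le_rkOf (Finset.insert_subset_insert z hAS)
      (hM.indep_subset hins (Finset.insert_subset_insert z hAD))
    rw [Finset.card_insert_of_notMem fun hzA => hzD (hAD hzA)] at this
    lia
  · have := card_le_rkOf (Finset.insert_subset hzT hDT) hins
    rw [Finset.card_insert_of_notMem hzD] at this
    lia

lemma exists_insert_erase_indep (hS : Ind S) (hT : Ind T) {x : V} (hxS : x ∈ S) (hxT : x ∉ T)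
    (hdep : ¬ Ind (insert x T)) : ∃ u ∈ T, u ∉ S ∧ Ind (insert x (T.erase u)) := by
  have hsub : insert x (T ∩ S) ⊆ S := Finset.insert_subset hxS Finset.inter_subset_right
  obtain ⟨D, hD, hDT, hDind, hDcard⟩ := hM.exists_indep_superset_card_eq_rkOf
    (hM.indep_subset hS hsub) (Finset.insert_subset_insert x Finset.inter_subset_left)
  have hTD : T.card ≤ D.card := hDcard ▸ card_le_rkOf (Finset.subset_insert x T) hT
  have hne : D ≠ insert x T := fun h => hdep (h ▸ hDind)
  obtain ⟨u, hu, huD⟩ := Finset.exists_of_ssubset (hDT.ssubset_of_ne hne)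
  have hux : x ≠ u := fun h => huD (hD (h ▸ Finset.mem_insert_self _ _))
  have huT : u ∈ T := (Finset.mem_insert.1 hu).resolve_left hux.symm
  have huS : u ∉ S := fun huS =>
    huD (hD (Finset.mem_insert_of_mem (Finset.mem_inter.2 ⟨huT, huS⟩)))
  refine ⟨u, huT, huS, ?_⟩
  rw [← Finset.erase_insert_of_ne hux]
  rwa [← Finset.eq_of_subset_of_card_le (Finset.subset_erase.2 ⟨hDT, huD⟩)]
  rwa [Finset.card_erase_of_mem hu, Finset.card_insert_of_notMem hxT]

end IsMatroid

end Rank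

section ParallelClasses

variable {Ind : Finset X → Prop} {S : Finset X} {i j z : X}

lemma mem_mCont : i ∈ mCont Ind S ↔ i ∉ S ∧ Ind (insert i S) := by
  simp [mCont]

lemma IsMatroid.parallel_trans (hM : IsMatroid Ind) (hi : i ∈ mCont Ind S) (hj : j ∈ mCont Ind S)
    (hz : z ∈ mCont Ind S) (hij : j = i ∨ ¬ Ind (insert j (insert i S)))
    (hiz : z = i ∨ ¬ Ind (insert z (insert i S))) : z = j ∨ ¬ Ind (insert z (insert j S)) := by
  rw [mem_mCont] at hi hj hz
  by_contra! hjz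
  obtain ⟨hzj, hind⟩ := hjz
  have hcard : (insert i S).card < (insert z (insert j S)).card := by
    rw [Finset.card_insert_of_notMem hi.1, Finset.card_insert_of_notMem (by simp [hzj, hz.1]),
      Finset.card_insert_of_notMem hj.1]
    exact Nat.lt_succ_self _
  obtain ⟨y, hy, hyi, hyind⟩ := hM.exists_insert_indep hi.2 hind hcard
  simp only [Finset.mem_insert, not_or] at hy hyi
  rcases hy with rfl | rfl | hyS
  · exact hiz.elim hyi.1 (· hyind)
  · exact hij.elim hyi.1 (· hyind)
  · exact hyi.2 hyS

lemma IsMatroid.mParClass_eq_iff (hM : IsMatroid Ind) (hi : i ∈ mCont Ind S)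
    (hj : j ∈ mCont Ind S) :
    mParClass Ind S i = mParClass Ind S j ↔ j = i ∨ ¬ Ind (insert j (insert i S)) := by
  refine ⟨fun h => ?_, fun hij => ?_⟩
  · have hmem : j ∈ mParClass Ind S j := Finset.mem_filter.2 ⟨hj, .inl rfl⟩
    rw [← h] at hmem
    exact (Finset.mem_filter.1 hmem).2
  · have hji : i = j ∨ ¬ Ind (insert i (insert j S)) := by rwa [eq_comm, Finset.insert_comm]
    exact Finset.filter_congr fun z hz =>
      ⟨hM.parallel_trans hi hj hz hij, hM.parallel_trans hj hi hz hji⟩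

lemma IsMatroid.mParClass_ne_iff (hM : IsMatroid Ind) :
    (i ∈ mCont Ind S ∧ j ∈ mCont Ind S ∧ mParClass Ind S i ≠ mParClass Ind S j) ↔
      j ∉ S ∧ i ∉ insert j S ∧ Ind (insert i (insert j S)) := by
  refine ⟨fun ⟨hi, hj, hne⟩ => ?_, fun ⟨hj, hi, hind⟩ => ?_⟩
  · rw [ne_eq, hM.mParClass_eq_iff hi hj, not_or, not_not, Finset.insert_comm] at hne
    have hiS := (mem_mCont.1 hi).1
    exact ⟨(mem_mCont.1 hj).1, by simp [hiS, Ne.symm hne.1], hne.2⟩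
  · rw [Finset.mem_insert, not_or] at hi
    have hi' : i ∈ mCont Ind S := mem_mCont.2 ⟨hi.2, hM.indep_subset hind
      (Finset.insert_subset_insert i (Finset.subset_insert j S))⟩
    have hj' : j ∈ mCont Ind S := mem_mCont.2 ⟨hj, hM.indep_subset hind (Finset.subset_insert i _)⟩
    rw [ne_eq, hM.mParClass_eq_iff hi' hj', not_or, not_not, Finset.insert_comm]
    exact ⟨hi', hj', Ne.symm hi.1, hind⟩

end ParallelClasses

section MorphismBases

lemma add_card_le_of_forall_erase_lt {V : Type*} [DecidableEq V] {h : Finset V → ℕ}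
    (hmono : Monotone h)
    (hclosure : ∀ ⦃S T x⦄, S ⊆ T → h (insert x S) = h S → h (insert x T) = h T)
    {U D : Finset V} (hDU : D ⊆ U) (hlt : ∀ u ∈ D, h (U.erase u) < h U) :
    h (U \ D) + D.card ≤ h U := by
  induction D using Finset.induction_on with
  | empty => simp
  | insert u D huD ih =>
    have huU : u ∈ U := hDU (Finset.mem_insert_self u D)
    have hins : insert u (U \ insert u D) = U \ D := by
      rw [Finset.sdiff_insert, Finset.insert_erase (Finset.mem_sdiff.2 ⟨huU, huD⟩)]
    have hle : h (U \ insert u D) ≤ h (U \ D) :=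
      hmono (Finset.sdiff_subset_sdiff subset_rfl (Finset.subset_insert u D))
    have hne : h (U \ insert u D) ≠ h (U \ D) := fun heq => by
      have hsub : U \ insert u D ⊆ U.erase u := by
        rw [Finset.sdiff_insert]; exact Finset.erase_subset_erase u Finset.sdiff_subset
      have := hclosure hsub (by rw [hins, heq])
      rw [Finset.insert_erase huU] at this
      exact (hlt u (Finset.mem_insert_self u D)).ne' this
    have := ih ((Finset.subset_insert u D).trans hDU) fun v hv =>
      hlt v (Finset.mem_insert_of_mem hv)
    rw [Finset.card_insert_of_notMem huD]
    lia

/-- A family of sets is M♮-convex if the indicator vectors of its members, homogenized by one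
further coordinate, form an M-convex set: `exists_erase` exchanges this coordinate, `exists_insert`
any other. -/
structure IsMNaturalFamily {V : Type*} [DecidableEq V] (B : Finset V → Prop) : Prop where
  exists_erase : ∀ ⦃S T⦄, B S → B T → S.card < T.card → ∃ u ∈ T, u ∉ S ∧ B (T.erase u)
  exists_insert : ∀ ⦃S T⦄, B S → B T → ∀ x ∈ S, x ∉ T →
    (T.card < S.card ∧ B (insert x T)) ∨ ∃ u ∈ T, u ∉ S ∧ B (insert x (T.erase u))

variable {V Z : Type*} [Fintype Z] [DecidableEq Z] {IndepM : Finset V → Prop}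
  {IndepN : Finset Z → Prop} {Φ : V → Z} {S T U D : Finset V}

lemma IsPhiBasis.of_subset (hS : IsPhiBasis IndepM IndepN Φ S) (hST : S ⊆ T) (hT : IndepM T) :
    IsPhiBasis IndepM IndepN Φ T :=
  ⟨hT, (rkOf_mono (Finset.subset_univ _)).antisymm
    (hS.2 ▸ rkOf_mono (Finset.image_subset_image hST))⟩

namespace IsMorphism

variable [DecidableEq V] (hΦ : IsMorphism IndepM IndepN Φ)
include hΦ

lemma isPhiBasis_of_rkOf_le (hT : IsPhiBasis IndepM IndepN Φ T) (hTU : T ⊆ U) (hD : IndepM D)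
    (hDU : D ⊆ U) (hU : rkOf IndepM U ≤ D.card) : IsPhiBasis IndepM IndepN Φ D := by
  refine ⟨hD, (rkOf_mono (Finset.subset_univ _)).antisymm ?_⟩
  have hquot := hΦ D U hDU
  have himage : rkOf IndepN (T.image Φ) ≤ rkOf IndepN (U.image Φ) :=
    rkOf_mono (Finset.image_subset_image hTU)
  rw [rkOf_eq_card hD] at hquot
  rw [hT.2] at himage
  lia

lemma card_le_card_sdiff (hM : IsMatroid IndepM) (hN : IsMatroid IndepN)
    (hS : IsPhiBasis IndepM IndepN Φ S) (hDU : D ⊆ U) (hUD : U \ D ⊆ S)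
    (hlt : ∀ u ∈ D, rkOf IndepN ((U.erase u).image Φ) < rkOf IndepN (U.image Φ)) :
    D.card ≤ (S \ (U \ D)).card := by
  have hcoloop := add_card_le_of_forall_erase_lt
    (h := fun A => rkOf IndepN (A.image Φ))
    (fun A A' hA => rkOf_mono (Finset.image_subset_image hA))
    (fun A A' x hA hx => by
      simp only [Finset.image_insert] at hx ⊢
      exact hN.rkOf_insert_eq_of_subset (Finset.image_subset_image hA) hx) hDU hlt
  have hU : rkOf IndepN (U.image Φ) ≤ rkOf IndepN Finset.univ := rkOf_mono (Finset.subset_univ _)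
  have hquot := hΦ _ _ hUD
  rw [rkOf_eq_card hS.1, rkOf_eq_card (hM.indep_subset hS.1 hUD), hS.2] at hquot
  rw [Finset.card_sdiff_of_subset hUD]
  lia

lemma exists_isPhiBasis_erase (hM : IsMatroid IndepM) (hN : IsMatroid IndepN)
    (hS : IsPhiBasis IndepM IndepN Φ S) (hT : IsPhiBasis IndepM IndepN Φ T)
    (hcard : S.card < T.card) : ∃ u ∈ T, u ∉ S ∧ IsPhiBasis IndepM IndepN Φ (T.erase u) := by
  by_contra! hno
  have hle := hΦ.card_le_card_sdiff hM hN hS (U := T) (D := T \ S) Finset.sdiff_subset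
    (by rw [sdiff_sdiff_right_self]; exact Finset.inter_subset_right) fun u hu => by
      rw [Finset.mem_sdiff] at hu
      rw [hT.2]
      exact (rkOf_mono (Finset.subset_univ _)).lt_of_ne fun h =>
        hno u hu.1 hu.2 ⟨hM.indep_subset hT.1 (Finset.erase_subset u T), h⟩
  have hST := Finset.card_sdiff_add_card_inter S T
  have hTS := Finset.card_sdiff_add_card_inter T S
  rw [sdiff_sdiff_right_self, Finset.inf_eq_inter, Finset.inter_comm,
    Finset.sdiff_inter_self_left] at hle
  rw [Finset.inter_comm] at hTS
  lia

lemma exists_isPhiBasis_insert_erase (hM : IsMatroid IndepM) (hN : IsMatroid IndepN)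
    (hS : IsPhiBasis IndepM IndepN Φ S) (hT : IsPhiBasis IndepM IndepN Φ T) {x : V} (hxS : x ∈ S)
    (hxT : x ∉ T) (hind : IndepM (insert x T)) (hcard : S.card ≤ T.card) :
    ∃ u ∈ T, u ∉ S ∧ IsPhiBasis IndepM IndepN Φ (insert x (T.erase u)) := by
  by_contra! hno
  have hsdiff : insert x T \ (T \ S) = insert x (T ∩ S) := by
    rw [Finset.insert_sdiff_of_notMem _ (by simp [hxT]), sdiff_sdiff_right_self,
      Finset.inf_eq_inter]
  have hsub : insert x (T ∩ S) ⊆ S := Finset.insert_subset hxS Finset.inter_subset_right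
  have hle := hΦ.card_le_card_sdiff hM hN hS (U := insert x T) (D := T \ S)
    (Finset.sdiff_subset.trans (Finset.subset_insert x T)) (hsdiff ▸ hsub) fun u hu => by
      rw [Finset.mem_sdiff] at hu
      have hux : x ≠ u := fun h => hxT (h ▸ hu.1)
      rw [(hT.of_subset (Finset.subset_insert x T) hind).2, Finset.erase_insert_of_ne hux]
      exact (rkOf_mono (Finset.subset_univ _)).lt_of_ne fun h => hno u hu.1 hu.2
        ⟨hM.indep_subset hind (Finset.insert_subset_insert x (Finset.erase_subset u T)), h⟩
  rw [hsdiff, Finset.card_sdiff_of_subset hsub,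
    Finset.card_insert_of_notMem fun h => hxT (Finset.mem_inter.1 h).1] at hle
  have hTS := Finset.card_sdiff_add_card_inter T S
  have := Finset.card_le_card hsub
  rw [Finset.card_insert_of_notMem fun h => hxT (Finset.mem_inter.1 h).1] at this
  lia

theorem isMNaturalFamily_isPhiBasis (hM : IsMatroid IndepM) (hN : IsMatroid IndepN) :
    IsMNaturalFamily (IsPhiBasis IndepM IndepN Φ) where
  exists_erase _ _ hS hT hcard := hΦ.exists_isPhiBasis_erase hM hN hS hT hcard
  exists_insert S T hS hT x hxS hxT := by
    by_cases hind : IndepM (insert x T)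
    · rcases lt_or_ge T.card S.card with hlt | hge
      · exact .inl ⟨hlt, hT.of_subset (Finset.subset_insert x T) hind⟩
      · exact .inr (hΦ.exists_isPhiBasis_insert_erase hM hN hS hT hxS hxT hind hge)
    · obtain ⟨u, huT, huS, hu⟩ := hM.exists_insert_erase_indep hS.1 hT.1 hxS hxT hind
      refine .inr ⟨u, huT, huS, hΦ.isPhiBasis_of_rkOf_le hT (Finset.subset_insert x T) hu
        (Finset.insert_subset_insert x (Finset.erase_subset u T))
        (rkOf_le_iff.2 fun A hA hAind => ?_)⟩
      have hne : A ≠ insert x T := fun h => hind (h ▸ hAind)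
      have hcard := Finset.card_lt_card (hA.ssubset_of_ne hne)
      have hxu : x ∉ T.erase u := fun h => hxT (Finset.mem_of_mem_erase h)
      rw [Finset.card_insert_of_notMem hxT] at hcard
      rw [Finset.card_insert_of_notMem hxu, Finset.card_erase_add_one huT]
      lia

end IsMorphism

end MorphismBases

section Homogenization

variable {V : Type*}

/-- The multiset `γ` with all occurrences of `none` removed. -/
def somePart (γ : Multiset (Option V)) : Multiset V :=
  γ.filterMap id

@[simp] lemma somePart_cons_none (γ : Multiset (Option V)) :
    somePart (none ::ₘ γ) = somePart γ :=
  Multiset.filterMap_cons_none _ _ rfl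

@[simp] lemma somePart_cons_some (i : V) (γ : Multiset (Option V)) :
    somePart (some i ::ₘ γ) = i ::ₘ somePart γ :=
  Multiset.filterMap_cons_some _ _ _ rfl

variable [DecidableEq V]

/-- The coefficient function of the form `∑ S, c k * φ S * y ^ k / k! * ∏ i ∈ S, x i`, where `y` is
the variable indexed by `none` and `k` is the degree minus `S.card`. -/
def homogenize (c : ℕ → ℝ) (φ : Finset V → ℝ) (γ : Multiset (Option V)) : ℝ :=
  if (somePart γ).Nodup then c (γ.count none) * φ (somePart γ).toFinset else 0

variable [Fintype V]

/-- The effect on coefficients of differentiating the form `∑ S, φ S * ∏ i ∈ S, x i` in the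
direction `ω`. -/
def insertSum (ω : V → ℝ) (φ : Finset V → ℝ) (S : Finset V) : ℝ :=
  ∑ i ∈ Sᶜ, ω i * φ (insert i S)

lemma contract_homogenize (c : ℕ → ℝ) (ω : V → ℝ) (φ : Finset V → ℝ) :
    contract (fun o => o.elim 0 ω) (homogenize c φ) = homogenize c (insertSum ω φ) := by
  ext γ
  rw [contract, Fintype.sum_option, homogenize]
  simp only [Option.elim, zero_mul, zero_add, homogenize, somePart_cons_some, Multiset.nodup_cons,
    Multiset.toFinset_cons, Multiset.count_cons_of_ne (Option.some_ne_none _).symm]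
  split_ifs with hγ
  · simp only [hγ, and_true, mul_ite, mul_zero, ← Finset.sum_filter, insertSum, Finset.mul_sum,
      mul_left_comm (c _)]
    exact Finset.sum_congr (by ext i; simp) fun _ _ => rfl
  · simp [hγ]

lemma iterate_contract_homogenize (c : ℕ → ℝ) (ω : V → ℝ) (φ : Finset V → ℝ) (m : ℕ) :
    (contract fun o => o.elim 0 ω)^[m] (homogenize c φ) =
      homogenize c ((insertSum ω)^[m] φ) :=
  (Function.Semiconj.iterate_right (f := homogenize c) (fun φ => (contract_homogenize c ω φ).symm) m
    φ).symm

lemma sum_powersetCard_sum_compl_insert (F : Finset V → ℝ) (m : ℕ) :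
    ∑ T ∈ Finset.univ.powersetCard m, ∑ i ∈ Tᶜ, F (insert i T) =
      (m + 1) * ∑ U ∈ Finset.univ.powersetCard (m + 1), F U := by
  have hcount : ∑ U ∈ (Finset.univ : Finset V).powersetCard (m + 1), ∑ _i ∈ U, F U =
      (m + 1) * ∑ U ∈ Finset.univ.powersetCard (m + 1), F U := by
    rw [Finset.mul_sum]
    refine Finset.sum_congr rfl fun U hU => ?_
    rw [Finset.sum_const, Finset.mem_powersetCard_univ.1 hU, nsmul_eq_mul, Nat.cast_succ]
  rw [← hcount, Finset.sum_sigma', Finset.sum_sigma']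
  refine Finset.sum_bij' (fun p _ => ⟨insert p.2 p.1, p.2⟩) (fun p _ => ⟨p.1.erase p.2, p.2⟩)
    ?_ ?_ ?_ ?_ ?_ <;>
  simp +contextual

/-- The total weight of the members of size `k` of the family `B`, a set having as weight the
product of the weights of its elements. -/
def familyWeight (B : Finset V → Prop) (ω : V → ℝ) (k : ℕ) : ℝ :=
  ∑ S with B S ∧ S.card = k, ∏ i ∈ S, ω i

lemma iterate_insertSum_empty (ω : V → ℝ) (φ : Finset V → ℝ) (m : ℕ) :
    (insertSum ω)^[m] φ ∅ =
      m.factorial * ∑ T ∈ Finset.univ.powersetCard m, (∏ i ∈ T, ω i) * φ T := by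
  induction m generalizing φ with
  | zero => simp
  | succ m ih =>
    have hinsert (T : Finset V) : (∏ i ∈ T, ω i) * insertSum ω φ T =
        ∑ i ∈ Tᶜ, (∏ j ∈ insert i T, ω j) * φ (insert i T) := by
      rw [insertSum, Finset.mul_sum]
      refine Finset.sum_congr rfl fun i hi => ?_
      rw [Finset.prod_insert (Finset.mem_compl.1 hi)]
      ring
    rw [Function.iterate_succ_apply, ih]
    simp only [hinsert]
    rw [sum_powersetCard_sum_compl_insert fun U => (∏ i ∈ U, ω i) * φ U, Nat.factorial_succ]
    push_cast
    ring

lemma iterate_insertSum_indicator_empty (B : Finset V → Prop) (ω : V → ℝ) (m : ℕ) :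
    (insertSum ω)^[m] (fun S => if B S then 1 else 0) ∅ = m.factorial * familyWeight B ω m := by
  rw [iterate_insertSum_empty, familyWeight]
  simp only [mul_ite, mul_one, mul_zero, ← Finset.sum_filter]
  congr 2
  ext S
  simp [and_comm]

end Homogenization

section BasisForm

variable {V : Type*} [DecidableEq V]

lemma count_somePart (i : V) (γ : Multiset (Option V)) :
    (somePart γ).count i = γ.count (some i) := by
  induction γ using Multiset.induction_on with
  | empty => rfl
  | cons o γ ih => cases o <;> simp [Multiset.count_cons, ih]

lemma card_somePart_add_count_none (γ : Multiset (Option V)) :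
    (somePart γ).card + γ.count none = γ.card := by
  induction γ using Multiset.induction_on with
  | empty => rfl
  | cons o γ ih => cases o <;> simp [← ih, add_assoc, add_comm 1]

lemma somePart_erase_none (γ : Multiset (Option V)) : somePart (γ.erase none) = somePart γ := by
  ext i
  rw [count_somePart, count_somePart, Multiset.count_erase_of_ne (Option.some_ne_none i)]

lemma somePart_erase_some (γ : Multiset (Option V)) (i : V) :
    somePart (γ.erase (some i)) = (somePart γ).erase i := by
  ext j
  rw [count_somePart]
  rcases eq_or_ne j i with rfl | hji
  · rw [Multiset.count_erase_self, Multiset.count_erase_self, count_somePart]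
  · rw [Multiset.count_erase_of_ne hji, Multiset.count_erase_of_ne (by simpa using hji),
      count_somePart]

lemma count_val_lt_count_val {S T : Finset V} {x : V} :
    T.val.count x < S.val.count x ↔ x ∈ S ∧ x ∉ T := by
  rw [Multiset.count_eq_of_nodup T.nodup, Multiset.count_eq_of_nodup S.nodup]
  by_cases hS : x ∈ S <;> by_cases hT : x ∈ T <;> simp [hS, hT]

/-- The coefficients of the truncated series `1 + y + τ * y ^ 2 / 2!`. -/
def truncCoeff (τ : ℝ) : ℕ → ℝ
  | 0 => 1
  | 1 => 1
  | 2 => τ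
  | _ => 0

lemma truncCoeff_pos_iff {τ : ℝ} (hτ : 0 < τ) (k : ℕ) : 0 < truncCoeff τ k ↔ k ≤ 2 := by
  match k with
  | 0 | 1 | 2 => simp [truncCoeff, hτ]
  | k + 3 => simp [truncCoeff]

lemma truncCoeff_nonneg {τ : ℝ} (hτ : 0 ≤ τ) (k : ℕ) : 0 ≤ truncCoeff τ k := by
  match k with
  | 0 | 1 | 2 => simp [truncCoeff, hτ]
  | k + 3 => simp [truncCoeff]

/-- The coefficient function of the form `∑ S, c k * y ^ k / k! * ∏ i ∈ S, x i`, where `S` runs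
through the members of `B`, `y` is the variable indexed by `none`, `k` is the degree minus `S.card`,
and `c` is `truncCoeff τ`. -/
def basisForm (B : Finset V → Prop) (τ : ℝ) : Multiset (Option V) → ℝ :=
  homogenize (truncCoeff τ) fun S => if B S then 1 else 0

variable {B Ind : Finset V → Prop} {τ : ℝ}

lemma basisForm_of_not_nodup {γ : Multiset (Option V)} (hγ : ¬ (somePart γ).Nodup) :
    basisForm B τ γ = 0 :=
  if_neg hγ

lemma basisForm_of_somePart_eq {S : Finset V} {γ : Multiset (Option V)} (hγ : somePart γ = S.val) :
    basisForm B τ γ = if B S then truncCoeff τ (γ.count none) else 0 := by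
  rw [basisForm, homogenize, hγ, if_pos S.nodup, Finset.val_toFinset, mul_ite, mul_one, mul_zero]

lemma basisForm_of_somePart_eq_cons {S : Finset V} {i : V} {γ : Multiset (Option V)}
    (hγ : somePart γ = i ::ₘ S.val) :
    basisForm B τ γ =
      if i ∉ S ∧ B (insert i S) then truncCoeff τ (γ.count none) else 0 := by
  by_cases hi : i ∈ S
  · rw [basisForm_of_not_nodup (by simp [hγ, hi]), if_neg (fun h => h.1 hi)]
  · rw [basisForm_of_somePart_eq (hγ.trans (Finset.insert_val_of_notMem hi).symm)]
    simp only [hi, not_false_iff, true_and]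

lemma basisForm_pos_iff (hτ : 0 < τ) {γ : Multiset (Option V)} :
    0 < basisForm B τ γ ↔ γ.count none ≤ 2 ∧ ∃ S, B S ∧ somePart γ = S.val := by
  refine ⟨fun hpos => ?_, fun ⟨hcount, S, hS, hγ⟩ => ?_⟩
  · by_cases hγ : (somePart γ).Nodup
    · rw [basisForm_of_somePart_eq (S := ⟨somePart γ, hγ⟩) rfl] at hpos
      split_ifs at hpos with hB
      · exact ⟨(truncCoeff_pos_iff hτ _).1 hpos, _, hB, rfl⟩
      · exact absurd hpos (lt_irrefl 0)
    · exact absurd (basisForm_of_not_nodup hγ ▸ hpos) (lt_irrefl 0)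
  · rw [basisForm_of_somePart_eq hγ, if_pos hS]
    exact (truncCoeff_pos_iff hτ _).2 hcount

lemma basisForm_nonneg (hτ : 0 ≤ τ) (γ : Multiset (Option V)) : 0 ≤ basisForm B τ γ := by
  rw [basisForm, homogenize]
  split_ifs
  · exact mul_nonneg (truncCoeff_nonneg hτ _) zero_le_one
  · exact mul_nonneg (truncCoeff_nonneg hτ _) le_rfl
  · exact le_rfl

lemma basisForm_eq_truncCoeff (hτ : 0 < τ) {γ : Multiset (Option V)} (hγ : 0 < basisForm B τ γ) :
    basisForm B τ γ = truncCoeff τ (γ.count none) := by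
  obtain ⟨-, S, hS, hγS⟩ := (basisForm_pos_iff hτ).1 hγ
  rw [basisForm_of_somePart_eq hγS, if_pos hS]

lemma IsMNaturalFamily.hasMConvexSupport_basisForm (hB : IsMNaturalFamily B) (hτ : 0 < τ) (d : ℕ) :
    HasMConvexSupport (basisForm B τ) d := by
  intro γ δ hγd hδd hγ hδ o ho
  simp only [basisForm_pos_iff hτ] at hγ hδ ⊢
  obtain ⟨hγ₂, S, hS, hγS⟩ := hγ
  obtain ⟨hδ₂, T, hT, hδT⟩ := hδ
  have hcard : S.card + γ.count none = T.card + δ.count none := by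
    rw [Finset.card_def, Finset.card_def, ← hγS, ← hδT, card_somePart_add_count_none,
      card_somePart_add_count_none, hγd, hδd]
  have hsome (x : V) : δ.count (some x) < γ.count (some x) ↔ x ∈ S ∧ x ∉ T := by
    rw [← count_somePart, ← count_somePart, hγS, hδT, count_val_lt_count_val]
  have hsome' (x : V) : γ.count (some x) < δ.count (some x) ↔ x ∈ T ∧ x ∉ S := by
    rw [← count_somePart, ← count_somePart, hγS, hδT, count_val_lt_count_val]
  have hinsert {x : V} {U : Finset V} (hxU : x ∉ U) : x ::ₘ U.val = (insert x U).val :=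
    (Finset.insert_val_of_notMem hxU).symm
  rcases o with _ | x
  · obtain ⟨u, huT, huS, hu⟩ := hB.exists_erase hS hT (by lia)
    refine ⟨some u, (hsome' u).2 ⟨huT, huS⟩, ?_, T.erase u, hu, ?_⟩
    · rw [Multiset.count_cons_self, Multiset.count_erase_of_ne (Option.some_ne_none u).symm]
      lia
    · rw [somePart_cons_none, somePart_erase_some, hδT, Finset.erase_val]
  obtain ⟨hxS, hxT⟩ := (hsome x).1 ho
  have hcount (j : Option V) : (some x ::ₘ δ.erase j).count none ≤ 2 := by
    rw [Multiset.count_cons_of_ne (Option.some_ne_none x).symm]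
    exact (Multiset.count_le_of_le none (Multiset.erase_le j δ)).trans hδ₂
  rcases hB.exists_insert hS hT x hxS hxT with ⟨hlt, hins⟩ | ⟨u, huT, huS, hu⟩
  · refine ⟨none, by lia, hcount _, insert x T, hins, ?_⟩
    rw [somePart_cons_some, somePart_erase_none, hδT, hinsert hxT]
  · refine ⟨some u, (hsome' u).2 ⟨huT, huS⟩, hcount _, insert x (T.erase u), hu, ?_⟩
    rw [somePart_cons_some, somePart_erase_some, hδT, ← Finset.erase_val,
      hinsert fun h => hxT (Finset.mem_of_mem_erase h)]

lemma exists_hessian_basisForm_eq_diagonal_scaling (hτ : 0 < τ) {α : Multiset (Option V)}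
    (hnone : ¬ 0 < basisForm B τ (none ::ₘ none ::ₘ α)) :
    ∃ d : Option V → ℝ, hessian (basisForm B τ) α = Matrix.of fun i j =>
      d i * (if 0 < basisForm B τ (i ::ₘ j ::ₘ α) then 1 else 0) * d j := by
  set a := α.count none with ha
  refine ⟨fun o => o.elim (truncCoeff τ (a + 1) / √(truncCoeff τ a)) fun _ => √(truncCoeff τ a), ?_⟩
  ext i j
  rw [hessian, Matrix.of_apply, Matrix.of_apply]
  by_cases hij : 0 < basisForm B τ (i ::ₘ j ::ₘ α)
  · have ha₀ : 0 < truncCoeff τ a := by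
      have hle : α ≤ i ::ₘ j ::ₘ α := (Multiset.le_cons_self α j).trans (Multiset.le_cons_self _ i)
      exact (truncCoeff_pos_iff hτ a).2 <|
        (Multiset.count_le_of_le none hle).trans ((basisForm_pos_iff hτ).1 hij).1
    have hsqrt : √(truncCoeff τ a) ≠ 0 := (Real.sqrt_pos.2 ha₀).ne'
    rw [if_pos hij, mul_one, basisForm_eq_truncCoeff hτ hij]
    rcases i with _ | i <;> rcases j with _ | j
    · exact absurd hij hnone
    · simp [hsqrt, ← ha]
    · simp [hsqrt, mul_div_cancel₀, ← ha]
    · simp [ha₀.le, ← ha]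
  · rw [if_neg hij, mul_zero, zero_mul]
    exact (not_lt.1 hij).antisymm (basisForm_nonneg hτ.le _)

lemma IsMNaturalFamily.isHyperbolicForm_hessian_basisForm [Fintype V] (hB : IsMNaturalFamily B)
    (hτ : 0 < τ) {α : Multiset (Option V)} (hnone : ¬ 0 < basisForm B τ (none ::ₘ none ::ₘ α)) :
    IsHyperbolicForm (hessian (basisForm B τ) α) := by
  obtain ⟨d, hd⟩ := exists_hessian_basisForm_eq_diagonal_scaling hτ hnone
  rw [hd]
  refine (isHyperbolicForm_of_adj_or_adj (R := fun i j => 0 < basisForm B τ (i ::ₘ j ::ₘ α))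
    (fun i j hij => Multiset.cons_swap i j α ▸ hij) ?_
    (hB.hasMConvexSupport_basisForm hτ _).pos_or_pos).diagonal_scaling d
  rintro (_ | i)
  · exact hnone
  · rw [basisForm_of_not_nodup (by simp)]
    exact lt_irrefl 0

lemma hessian_basisForm_eq_borderedMatrix {B Ind : Finset X → Prop} (hM : IsMatroid Ind)
    (hB : ∀ ⦃S T⦄, B S → S ⊆ T → (B T ↔ Ind T)) {S : Finset X} (hS : B S)
    {α : Multiset (Option X)} (hα : somePart α = S.val) (hnone : α.count none = 0) :
    hessian (basisForm B τ) α =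
      borderedMatrix τ (mCont Ind S) (multipartiteMatrix (mCont Ind S) (mParClass Ind S)) := by
  have hdiag : basisForm B τ (none ::ₘ none ::ₘ α) = τ := by
    rw [basisForm_of_somePart_eq (S := S) (by simpa using hα), if_pos hS]
    simp [hnone, truncCoeff]
  have hborder (i : X) : basisForm B τ (none ::ₘ some i ::ₘ α) =
      borderedMatrix τ (mCont Ind S) (multipartiteMatrix (mCont Ind S) (mParClass Ind S))
        none (some i) := by
    rw [basisForm_of_somePart_eq_cons (S := S) (i := i) (by simp [hα])]
    simp [borderedMatrix, mem_mCont, hB hS (Finset.subset_insert i S), hnone, truncCoeff]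
  have hinner (i j : X) : basisForm B τ (some i ::ₘ some j ::ₘ α) =
      multipartiteMatrix (mCont Ind S) (mParClass Ind S) i j := by
    simp only [multipartiteMatrix, Matrix.of_apply, hM.mParClass_ne_iff]
    by_cases hj : j ∈ S
    · rw [basisForm_of_not_nodup (by simp [hα, hj])]
      simp [hj]
    · have hsub : S ⊆ insert i (insert j S) :=
        (Finset.subset_insert j S).trans (Finset.subset_insert i _)
      rw [basisForm_of_somePart_eq_cons (S := insert j S) (i := i)
        (by simp [hα, Finset.insert_val_of_notMem hj])]
      simp [hj, hB hS hsub, hnone, truncCoeff]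
  ext (_ | i) (_ | j)
  · exact hdiag
  · exact hborder j
  · exact (congrArg _ (Multiset.cons_swap _ _ α)).trans (hborder i)
  · exact hinner i j

theorem IsMNaturalFamily.isLorentzian_basisForm {B Ind : Finset X → Prop}
    (hBconv : IsMNaturalFamily B) (hM : IsMatroid Ind)
    (hB : ∀ ⦃S T⦄, B S → S ⊆ T → (B T ↔ Ind T)) (hτ : 1 ≤ τ) {m : ℕ}
    (hcard : ∀ S, B S → S.card = m → ((mParClasses Ind S).card : ℝ) * (τ - 1) ≤ τ) :
    IsLorentzian (basisForm B τ) (m + 2) := by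
  have hτ₀ : 0 < τ := one_pos.trans_le hτ
  refine ⟨basisForm_nonneg hτ₀.le, hBconv.hasMConvexSupport_basisForm hτ₀ _, fun α hα => ?_⟩
  by_cases hnone : 0 < basisForm B τ (none ::ₘ none ::ₘ α)
  · obtain ⟨hcount, S, hS, hαS⟩ := (basisForm_pos_iff hτ₀).1 hnone
    rw [somePart_cons_none, somePart_cons_none] at hαS
    have hα₀ : α.count none = 0 := by simpa using hcount
    have hαcard := card_somePart_add_count_none α
    rw [hessian_basisForm_eq_borderedMatrix hM hB hS hαS hα₀]
    refine isHyperbolicForm_borderedMatrix_multipartiteMatrix hτ (hcard S hS ?_)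
    rw [hαS, Finset.card_val] at hαcard
    lia
  · exact hBconv.isHyperbolicForm_hessian_basisForm hτ₀ hnone

end BasisForm

section LogConcavity

lemma iterate_contract_basisForm_replicate_none {V : Type*} [Fintype V] [DecidableEq V]
    (B : Finset V → Prop) (τ : ℝ) (ω : V → ℝ) (m k : ℕ) :
    (contract fun o => o.elim 0 ω)^[m] (basisForm B τ) (Multiset.replicate k none) =
      truncCoeff τ k * (m.factorial * familyWeight B ω m) := by
  have hpart : somePart (Multiset.replicate k (none : Option V)) = 0 := by
    induction k with
    | zero => rfl
    | succ k ih => rw [Multiset.replicate_succ, somePart_cons_none, ih]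
  rw [basisForm, iterate_contract_homogenize, homogenize, hpart, if_pos Multiset.nodup_zero,
    Multiset.count_replicate_self, Multiset.toFinset_zero, iterate_insertSum_indicator_empty]

theorem IsMNaturalFamily.familyWeight_mul_familyWeight_le_sq {B Ind : Finset X → Prop}
    (hBconv : IsMNaturalFamily B) (hM : IsMatroid Ind)
    (hB : ∀ ⦃S T⦄, B S → S ⊆ T → (B T ↔ Ind T)) {τ : ℝ} (hτ : 1 ≤ τ) {m : ℕ}
    (hcard : ∀ S, B S → S.card = m → ((mParClasses Ind S).card : ℝ) * (τ - 1) ≤ τ)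
    {ω : X → ℝ} (hω : ∀ i, 0 ≤ ω i) :
    (1 + 1 / ((m + 1 : ℕ) : ℝ)) * τ * familyWeight B ω m * familyWeight B ω (m + 2) ≤
      familyWeight B ω (m + 1) ^ 2 := by
  set W := familyWeight B ω
  have hx (o : Option X) : 0 ≤ o.elim 0 ω := by
    cases o
    · exact le_rfl
    · exact hω _
  have heval := iterate_contract_basisForm_replicate_none B τ ω
  have hkey : τ * (m.factorial * W m) * ((m + 2).factorial * W (m + 2)) ≤
      ((m + 1).factorial * W (m + 1)) ^ 2 := by
    have hlor :=
      (hBconv.isLorentzian_basisForm hM hB hτ hcard).iterate_contract_pair_mul_le_sq hx none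
    rw [show ({none, none} : Multiset (Option X)) = Multiset.replicate 2 none from rfl,
      ← Multiset.replicate_one, ← Multiset.replicate_zero none, heval, heval, heval] at hlor
    simpa only [truncCoeff, one_mul] using hlor
  refine le_of_mul_le_mul_left ?_ (by positivity : (0 : ℝ) < (m + 1).factorial ^ 2)
  calc ((m + 1).factorial : ℝ) ^ 2 * ((1 + 1 / ((m + 1 : ℕ) : ℝ)) * τ * W m * W (m + 2))
      = τ * (m.factorial * W m) * ((m + 2).factorial * W (m + 2)) := by
        simp only [Nat.factorial_succ]
        push_cast
        field_simp
    _ ≤ ((m + 1).factorial * W (m + 1)) ^ 2 := hkey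
    _ = (m + 1).factorial ^ 2 * W (m + 1) ^ 2 := mul_pow _ _ 2

end LogConcavity

/-- **Refined log-concavity for morphisms of matroids.** -/
theorem morphism_refined_log_concavity
    (IndepM : Finset X → Prop) (IndepN : Finset Y → Prop) (Φ : X → Y)
    (hM : IsMatroid IndepM) (hN : IsMatroid IndepN)
    (hΦ : IsMorphism IndepM IndepN Φ)
    (ω : X → ℝ) (hω : ∀ x, 0 < ω x)
    (k : ℕ) (hk1 : 1 ≤ k) (hk2 : k < rkOf IndepM (Finset.univ : Finset X))
    (hbasis : ∃ S : Finset X, IsPhiBasis IndepM IndepN Φ S ∧ S.card = k - 1)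
    (hp : 2 ≤ contNumB IndepM IndepN Φ (k - 1)) :
    ((1 : ℝ) + 1 / (k : ℝ)) *
        (1 + 1 / ((contNumB IndepM IndepN Φ (k - 1) : ℝ) - 1)) *
        Bw IndepM IndepN Φ ω (k - 1) * Bw IndepM IndepN Φ ω (k + 1) ≤
      (Bw IndepM IndepN Φ ω k) ^ 2 := by
  obtain ⟨m, rfl⟩ := Nat.exists_eq_add_of_le' hk1
  rw [Nat.add_sub_cancel] at hp ⊢
  set p := contNumB IndepM IndepN Φ m with hp_def
  have hp₁ : (0 : ℝ) < p - 1 := by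
    have : (2 : ℝ) ≤ p := by exact_mod_cast hp
    linarith
  refine (hΦ.isMNaturalFamily_isPhiBasis hM hN).familyWeight_mul_familyWeight_le_sq hM
    (fun S T hS hST => ⟨And.left, hS.of_subset hST⟩)
    (le_add_of_nonneg_right (one_div_nonneg.2 hp₁.le)) (fun S hS hSm => ?_) fun x => (hω x).le
  have hSp : ((mParClasses IndepM S).card : ℝ) ≤ p := by
    rw [hp_def]
    exact_mod_cast Finset.le_sup (f := fun S => (mParClasses IndepM S).card) (by simp [hS, hSm])
  calc ((mParClasses IndepM S).card : ℝ) * (1 + 1 / ((p : ℝ) - 1) - 1)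
      ≤ p * (1 + 1 / ((p : ℝ) - 1) - 1) := by gcongr; linarith [one_div_pos.2 hp₁]
    _ = 1 + 1 / ((p : ℝ) - 1) := by field_simp; ring
end
end

section
/- Let G = (X, L) be an interval greedoid, let k be an integer with 1 ≤ k < rk(G), and let q : L → ℝ_{>0} be a k-admissible weight function. Then L_q(k)² ≥ L_q(k−1)·L_q(k+1), where L_q(j) = Σ_{α ∈ L, |α| = j} q(α). -/
open scoped Classical BigOperators

noncomputable section

variable {X : Type*} [Fintype X] [DecidableEq X]

/-- All words of length `r` over the alphabet `X`. -/
def wordsLen (X : Type*) [Fintype X] [DecidableEq X] (r : ℕ) : Finset (List X) :=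
  (Finset.univ : Finset (Fin r → X)).image List.ofFn

namespace Grd

/-- The set `Cnt(α)` of one-letter continuations of a word `α` in the language `L`. -/
def Cnt (L : List X → Prop) (α : List X) : Finset X :=
  Finset.univ.filter (fun x => L (α ++ [x]))

/-- The set `Des_α(x)` of descendants of `x` with respect to `α`:
letters `y` with `αxy ∈ L` and `αy ∉ L`. -/
def Des (L : List X → Prop) (α : List X) (x : X) : Finset X :=
  Finset.univ.filter (fun y => L (α ++ [x, y]) ∧ ¬ L (α ++ [y]))

/-- The passive non-continuations `Pas_α(x,y)`. -/
def Pas (L : List X → Prop) (α : List X) (x y : X) : Finset X :=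
  Finset.univ.filter (fun z =>
    ¬ L (α ++ [z]) ∧ ¬ L (α ++ [x, z]) ∧ ¬ L (α ++ [y, z]) ∧ L (α ++ [x, y, z]))

/-- The active non-continuations `Act_α(x,y)`. -/
def Act (L : List X → Prop) (α : List X) (x y : X) : Finset X :=
  Finset.univ.filter (fun z =>
    ¬ L (α ++ [z]) ∧ L (α ++ [x, z]) ∧ L (α ++ [y, z]) ∧ L (α ++ [x, y, z]))

/-- The parallel class of `x ∈ Cnt(α)`:  continuations `y` with `y ∼_α x`, i.e. `y = x`
or `αxy ∉ L`. -/
def parClass (L : List X → Prop) (α : List X) (x : X) : Finset X :=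
  (Cnt L α).filter (fun y => y = x ∨ ¬ L (α ++ [x, y]))

/-- The set `Par(α)` of parallel classes of `α`. -/
def Par (L : List X → Prop) (α : List X) : Finset (Finset X) :=
  (Cnt L α).image (parClass L α)

/-- The scaled weight function `ω(α) = q(α)/c_{|α|}`. -/
def scaledWt (q : List X → ℝ) (c : ℕ → ℝ) (α : List X) : ℝ :=
  q α / c α.length

/-- The quantity `b_α(C)`: for a singleton parallel class `C = {x}` it equals
`Σ_{y ∈ Des_α(x)} ω(α)·ω(αxy)/ω(αx)²`, and it is `0` for classes with at least two
elements. -/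
def bClass (L : List X → Prop) (q : List X → ℝ) (c : ℕ → ℝ) (α : List X)
    (C : Finset X) : ℝ :=
  if C.card = 1 then
    ∑ x ∈ C, ∑ y ∈ Des L α x,
      scaledWt q c α * scaledWt q c (α ++ [x, y]) / (scaledWt q c (α ++ [x])) ^ 2
  else 0

/-- The weighted count `L_q(j) = Σ_{α ∈ L, |α| = j} q(α)`. -/
def Lq (L : List X → Prop) (q : List X → ℝ) (j : ℕ) : ℝ :=
  ∑ α ∈ (wordsLen X j).filter (fun α => L α), q α

end Grd

/-!
To a weight `p` and a feasible word `α` attach a symmetric matrix indexed by the letters and one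
extra index: its corner is `p α`, its first row and column are the weights of the one-letter
extensions, and the remaining entries are weights of two-letter extensions. Against the vectors
`e₀ = (1, 0, …, 0)` and `e₁ = (0, 1, …, 1)` its quadratic form takes the values `p α`, `P α` and
`P (P α)`, where `P` sums a weight over one-letter extensions. Hence log-concavity of
`p α, P α, P (P α)` is the reversed Cauchy–Schwarz inequality for this form, applied at the empty
word to `p = P^(k-1) q`; that inequality holds as soon as the form is hyperbolic, i.e. has at most
one positive eigenvalue.

Hyperbolicity passes from `p` at `α` and at all `αx` to `P p` at `α`. Passive-active monotonicity
bounds the form of `P p` at `α` by the sum of the forms of `p` at the words `αx`, and hyperbolicity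
of the latter turns this bound into a contraction inequality for the mixture `t P p + (1 - t) p`
with `t < 1`. By contraction, each positive eigenvalue of the normalised matrix is at least `1`,
so a Dirichlet-form argument shows that its eigenvector is the Perron–Frobenius one, and the
positive eigenspace is at most a line. Then let `t → 1`.

For `q` itself, log-modularity makes the form `(∑ U)² - ∑_C (1 - b_C) (∑_C U)²` up to scaling,
where `C` runs over the parallel classes; scale monotonicity and the Cauchy–Schwarz inequality make
it at most a multiple of a square that vanishes on the orthogonal complement of `e₀`.
-/

section Hyperbolic

open Matrix Filter Topology

variable {ι : Type*} [Fintype ι]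

/-- Hyperbolicity of the bilinear form of a real matrix: a reversed Cauchy–Schwarz inequality
against every vector of positive norm. For symmetric matrices this says that there is at most one
positive eigenvalue. -/
def Hyperbolic (M : Matrix ι ι ℝ) : Prop :=
  ∀ v w, 0 < w ⬝ᵥ M *ᵥ w → (v ⬝ᵥ M *ᵥ v) * (w ⬝ᵥ M *ᵥ w) ≤ (v ⬝ᵥ M *ᵥ w) ^ 2

theorem dotProduct_mulVec_comm {M : Matrix ι ι ℝ} (hM : M.IsSymm) (v w : ι → ℝ) :
    v ⬝ᵥ M *ᵥ w = w ⬝ᵥ M *ᵥ v := by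
  rw [dotProduct_mulVec, ← mulVec_transpose, hM.eq, dotProduct_comm]

theorem Hyperbolic.of_nonpos_on_orthogonal {M : Matrix ι ι ℝ} (hM : M.IsSymm) (h : ι → ℝ)
    (hneg : ∀ v, v ⬝ᵥ M *ᵥ h = 0 → v ⬝ᵥ M *ᵥ v ≤ 0) : Hyperbolic M := by
  intro v w hw
  set a := w ⬝ᵥ M *ᵥ h with ha
  set b := v ⬝ᵥ M *ᵥ h with hb
  have ha0 : a ≠ 0 := fun h0 => (hneg w h0).not_gt hw
  have horth : (a • v - b • w) ⬝ᵥ M *ᵥ h = 0 := by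
    simp only [sub_dotProduct, smul_dotProduct, ← ha, ← hb, smul_eq_mul]
    ring
  have hquad := hneg _ horth
  simp only [mulVec_sub, mulVec_smul, sub_dotProduct, dotProduct_sub, smul_dotProduct,
    dotProduct_smul, smul_eq_mul, dotProduct_mulVec_comm hM w v] at hquad
  refine le_of_mul_le_mul_left ?_ (pow_pos (abs_pos.2 ha0) 2)
  rw [sq_abs]
  nlinarith [mul_le_mul_of_nonneg_right hquad hw.le,
    sq_nonneg (a * (v ⬝ᵥ M *ᵥ w) - b * (w ⬝ᵥ M *ᵥ w))]

theorem Hyperbolic.of_tendsto {γ : Type*} {l : Filter γ} [l.NeBot] {F : γ → Matrix ι ι ℝ}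
    {M : Matrix ι ι ℝ} (hF : Tendsto F l (𝓝 M)) (hyp : ∀ᶠ t in l, Hyperbolic (F t)) :
    Hyperbolic M := by
  intro v w hw
  have hform (a b : ι → ℝ) : Tendsto (fun t => a ⬝ᵥ F t *ᵥ b) l (𝓝 (a ⬝ᵥ M *ᵥ b)) :=
    (Continuous.tendsto (by fun_prop : Continuous fun N : Matrix ι ι ℝ => a ⬝ᵥ N *ᵥ b) M).comp hF
  refine le_of_tendsto_of_tendsto ((hform v v).mul (hform w w)) ((hform v w).pow 2) ?_
  filter_upwards [hyp, (hform w w).eventually_const_lt hw] with t ht hpos using ht v w hpos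

theorem dotProduct_mulVec_nonpos_of_eigenvectors_orthogonal {B : Matrix ι ι ℝ}
    (hB : B.IsHermitian) (x : ι → ℝ)
    (horth : ∀ (μ : ℝ) (v : ι → ℝ), 0 < μ → B *ᵥ v = μ • v → v ⬝ᵥ x = 0) :
    x ⬝ᵥ B *ᵥ x ≤ 0 := by
  classical
  let e (k : ι) : ι → ℝ := hB.eigenvectorBasis k
  have he (k : ι) : B *ᵥ e k = hB.eigenvalues k • e k := hB.mulVec_eigenvectorBasis k
  have hsymm : B.IsSymm := (conjTranspose_eq_transpose_of_trivial B).symm.trans hB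
  have hexpand : x ⬝ᵥ B *ᵥ x = ∑ k, hB.eigenvalues k * (e k ⬝ᵥ x) ^ 2 := by
    have h := hB.eigenvectorBasis.sum_inner_mul_inner (WithLp.toLp 2 x) (WithLp.toLp 2 (B *ᵥ x))
    simp only [EuclideanSpace.inner_eq_star_dotProduct, star_trivial] at h
    rw [dotProduct_comm, ← h]
    refine Finset.sum_congr rfl fun k _ => ?_
    change (e k ⬝ᵥ x) * (B *ᵥ x ⬝ᵥ e k) = _
    rw [dotProduct_comm (B *ᵥ x), dotProduct_mulVec_comm hsymm, he, dotProduct_smul,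
      dotProduct_comm x, smul_eq_mul]
    ring
  rw [hexpand]
  refine Finset.sum_nonpos fun k _ => ?_
  rcases le_or_gt (hB.eigenvalues k) 0 with hk | hk
  · exact mul_nonpos_of_nonpos_of_nonneg hk (sq_nonneg _)
  · simp [horth _ _ hk (he k)]

theorem dotProduct_mulVec_nonpos_of_generalized_eigenvectors_orthogonal {M : Matrix ι ι ℝ}
    (hM : M.IsSymm) {d : ι → ℝ} (hd : ∀ i, 0 < d i) (x : ι → ℝ)
    (horth : ∀ (μ : ℝ) (v : ι → ℝ), 0 < μ → M *ᵥ v = μ • (d * v) → (d * v) ⬝ᵥ x = 0) :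
    x ⬝ᵥ M *ᵥ x ≤ 0 := by
  classical
  obtain ⟨s, hs, rfl⟩ : ∃ s : ι → ℝ, (∀ i, s i ≠ 0) ∧ s * s = d :=
    ⟨fun i => √(d i), fun i => (Real.sqrt_pos.2 (hd i)).ne',
      funext fun i => Real.mul_self_sqrt (hd i).le⟩
  have hss : s * s⁻¹ = 1 := funext fun i => mul_inv_cancel₀ (hs i)
  have hss' : s⁻¹ * s = 1 := by rw [mul_comm, hss]
  set B := diagonal s⁻¹ * M * diagonal s⁻¹ with hB
  have hBsymm : B.IsHermitian := by
    rw [IsHermitian, conjTranspose_eq_transpose_of_trivial, hB]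
    simp only [transpose_mul, diagonal_transpose, hM.eq, mul_assoc]
  have hBmul (w : ι → ℝ) : B *ᵥ w = s⁻¹ * M *ᵥ (s⁻¹ * w) := by
    have hdiag (u : ι → ℝ) : diagonal s⁻¹ *ᵥ u = s⁻¹ * u := funext (mulVec_diagonal _ _)
    rw [hB, ← mulVec_mulVec, ← mulVec_mulVec, hdiag, hdiag]
  have hform : (s * x) ⬝ᵥ B *ᵥ (s * x) = x ⬝ᵥ M *ᵥ x := by
    rw [hBmul, ← mul_assoc, hss', one_mul]
    refine Finset.sum_congr rfl fun i _ => ?_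
    have := hs i
    simp only [Pi.mul_apply, Pi.inv_apply]
    field_simp
  rw [← hform]
  refine dotProduct_mulVec_nonpos_of_eigenvectors_orthogonal hBsymm _ fun μ u hμ hu => ?_
  have hu' : s * s * (s⁻¹ * u) = s * u := by
    rw [mul_assoc, ← mul_assoc s s⁻¹, hss, one_mul]
  have hv : M *ᵥ (s⁻¹ * u) = μ • (s * s * (s⁻¹ * u)) := by
    rw [hu', ← mul_smul_comm, ← hu, hBmul, ← mul_assoc, hss, one_mul]
  rw [← horth μ (s⁻¹ * u) hμ hv, hu']
  exact Finset.sum_congr rfl fun i _ => by simp only [Pi.mul_apply]; ring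

theorem sum_sum_mul_sub_sq {M : Matrix ι ι ℝ} (hM : M.IsSymm) (h g : ι → ℝ) :
    ∑ i, ∑ j, M i j * (h i * h j) * (g i - g j) ^ 2 =
      2 * (∑ i, h i * g i ^ 2 * (M *ᵥ h) i - (h * g) ⬝ᵥ M *ᵥ (h * g)) := by
  have hswap : ∑ i, ∑ j, M i j * (h i * h j) * g j ^ 2 =
      ∑ i, ∑ j, M i j * (h i * h j) * g i ^ 2 := by
    rw [Finset.sum_comm]
    exact Finset.sum_congr rfl fun i _ => Finset.sum_congr rfl fun j _ => by
      rw [hM.apply i j]; ring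
  have hrow : ∑ i, h i * g i ^ 2 * (M *ᵥ h) i = ∑ i, ∑ j, M i j * (h i * h j) * g i ^ 2 := by
    simp only [mulVec, dotProduct, Finset.mul_sum]
    exact Finset.sum_congr rfl fun i _ => Finset.sum_congr rfl fun j _ => by ring
  have hcross : (h * g) ⬝ᵥ M *ᵥ (h * g) = ∑ i, ∑ j, M i j * (h i * h j) * (g i * g j) := by
    simp only [mulVec, dotProduct, Pi.mul_apply, Finset.mul_sum]
    exact Finset.sum_congr rfl fun i _ => Finset.sum_congr rfl fun j _ => by ring
  have hexpand (i j : ι) : M i j * (h i * h j) * (g i - g j) ^ 2 =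
      M i j * (h i * h j) * g i ^ 2 + M i j * (h i * h j) * g j ^ 2 -
        2 * (M i j * (h i * h j) * (g i * g j)) := by ring
  simp only [hexpand, Finset.sum_sub_distrib, Finset.sum_add_distrib, ← Finset.mul_sum]
  rw [hswap, hrow, hcross]
  ring

theorem eq_of_sum_sum_mul_sub_sq_nonpos {M : Matrix ι ι ℝ} (hM : ∀ i j, 0 ≤ M i j) {h g : ι → ℝ}
    (hh : ∀ i, 0 < h i) (hsum : ∑ i, ∑ j, M i j * (h i * h j) * (g i - g j) ^ 2 ≤ 0) {i j : ι}
    (hij : 0 < M i j) : g i = g j := by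
  have hterm (i j : ι) : 0 ≤ M i j * (h i * h j) * (g i - g j) ^ 2 :=
    mul_nonneg (mul_nonneg (hM i j) (mul_pos (hh i) (hh j)).le) (sq_nonneg _)
  have hle : M i j * (h i * h j) * (g i - g j) ^ 2 ≤ 0 :=
    calc M i j * (h i * h j) * (g i - g j) ^ 2
        ≤ ∑ j, M i j * (h i * h j) * (g i - g j) ^ 2 :=
          Finset.single_le_sum (f := fun j => M i j * (h i * h j) * (g i - g j) ^ 2)
            (fun j _ => hterm i j) (Finset.mem_univ j)
      _ ≤ ∑ i, ∑ j, M i j * (h i * h j) * (g i - g j) ^ 2 :=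
          Finset.single_le_sum (f := fun i => ∑ j, M i j * (h i * h j) * (g i - g j) ^ 2)
            (fun i _ => Finset.sum_nonneg fun j _ => hterm i j) (Finset.mem_univ i)
      _ ≤ 0 := hsum
  have hsq : (g i - g j) ^ 2 ≤ 0 :=
    nonpos_of_mul_nonpos_right hle (mul_pos hij (mul_pos (hh i) (hh j)))
  exact sub_eq_zero.1 (pow_eq_zero_iff two_ne_zero |>.1 (hsq.antisymm (sq_nonneg _)))

theorem sum_mul_sq_le_dotProduct_mulVec {M : Matrix ι ι ℝ} {d : ι → ℝ} (hd : ∀ i, 0 < d i)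
    {μ : ℝ} {v : ι → ℝ} (hμ : 0 < μ) (hv : M *ᵥ v = μ • (d * v))
    (hcontract : v ⬝ᵥ M *ᵥ v ≤ ∑ i, (M *ᵥ v) i ^ 2 / d i) :
    ∑ i, d i * v i ^ 2 ≤ v ⬝ᵥ M *ᵥ v := by
  have hvi (i : ι) : (M *ᵥ v) i = μ * (d i * v i) := congrFun hv i
  have hquad : v ⬝ᵥ M *ᵥ v = μ * ∑ i, d i * v i ^ 2 := by
    simp only [dotProduct, hvi, Finset.mul_sum]
    exact Finset.sum_congr rfl fun i _ => by ring
  have hdual : ∑ i, (M *ᵥ v) i ^ 2 / d i = μ * (μ * ∑ i, d i * v i ^ 2) := by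
    simp only [hvi, Finset.mul_sum]
    refine Finset.sum_congr rfl fun i _ => ?_
    have := (hd i).ne'
    field_simp
  -- With `K` the left-hand side, `hcontract` reads `μ K ≤ μ² K`.
  rw [hdual, hquad] at hcontract
  exact (le_of_mul_le_mul_left hcontract hμ).trans_eq hquad.symm

theorem generalized_eigenvector_eq_smul {M : Matrix ι ι ℝ} (hM : M.IsSymm)
    (hM0 : ∀ i j, 0 ≤ M i j) {h d : ι → ℝ} (hh : ∀ i, 0 < h i) (hd : ∀ i, 0 < d i) {n : ι}
    (hrow : ∀ i, 0 < M n i ∧ (M *ᵥ h) i = d i * h i ∨ ∀ j, M i j = 0) {μ : ℝ} {v : ι → ℝ}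
    (hμ : 0 < μ) (hv : M *ᵥ v = μ • (d * v))
    (hcontract : v ⬝ᵥ M *ᵥ v ≤ ∑ i, (M *ᵥ v) i ^ 2 / d i) :
    ∃ c : ℝ, d * v = c • M *ᵥ h := by
  have hzero {i : ι} (hi : ∀ j, M i j = 0) (w : ι → ℝ) : (M *ᵥ w) i = 0 := by
    simp [mulVec, dotProduct, hi]
  have hvi (i : ι) : (M *ᵥ v) i = μ * (d i * v i) := congrFun hv i
  have hnorm := sum_mul_sq_le_dotProduct_mulVec hd hμ hv hcontract
  obtain ⟨g, rfl⟩ : ∃ g, v = h * g :=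
    ⟨v / h, funext fun i => (mul_div_cancel₀ (v i) (hh i).ne').symm⟩
  have hdirichlet : ∑ i, ∑ j, M i j * (h i * h j) * (g i - g j) ^ 2 ≤ 0 := by
    have hle : ∑ i, h i * g i ^ 2 * (M *ᵥ h) i ≤ ∑ i, d i * (h * g) i ^ 2 := by
      refine Finset.sum_le_sum fun i _ => ?_
      rcases hrow i with ⟨-, hi⟩ | hi
      · rw [hi, Pi.mul_apply]
        exact le_of_eq (by ring)
      · rw [hzero hi, mul_zero]
        exact mul_nonneg (hd i).le (sq_nonneg _)
    rw [sum_sum_mul_sub_sq hM]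
    linarith
  refine ⟨g n, funext fun i => ?_⟩
  simp only [Pi.mul_apply, Pi.smul_apply, smul_eq_mul]
  rcases hrow i with ⟨hni, hi⟩ | hi
  · rw [eq_of_sum_sum_mul_sub_sq_nonpos hM0 hh hdirichlet hni, hi]
    ring
  · have hdv : μ * (d i * (h * g) i) = 0 := by rw [← hvi, hzero hi]
    rw [hzero hi, mul_zero]
    exact (mul_eq_zero.1 hdv).resolve_left hμ.ne'

theorem Hyperbolic.of_contraction {M : Matrix ι ι ℝ} (hM : M.IsSymm) (hM0 : ∀ i j, 0 ≤ M i j)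
    {h : ι → ℝ} (hh : ∀ i, 0 < h i) {n : ι} (hrow : ∀ i, 0 < M n i ∨ ∀ j, M i j = 0)
    (hcontract : ∀ v, v ⬝ᵥ M *ᵥ v ≤ ∑ i, h i * ((M *ᵥ v) i ^ 2 / (M *ᵥ h) i)) :
    Hyperbolic M := by
  classical
  have hpos {i : ι} (hi : 0 < M n i) : 0 < (M *ᵥ h) i :=
    Finset.sum_pos' (fun j _ => mul_nonneg (hM0 i j) (hh j).le)
      ⟨n, Finset.mem_univ n, mul_pos (hi.trans_eq (hM.apply i n)) (hh n)⟩
  obtain ⟨d, hd, hdrow, hdM⟩ : ∃ d : ι → ℝ, (∀ i, 0 < d i) ∧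
      (∀ i, 0 < M n i ∧ (M *ᵥ h) i = d i * h i ∨ ∀ j, M i j = 0) ∧
      ∀ v, v ⬝ᵥ M *ᵥ v ≤ ∑ i, (M *ᵥ v) i ^ 2 / d i := by
    refine ⟨fun i => if 0 < M n i then (M *ᵥ h) i / h i else 1, fun i => ?_, fun i => ?_,
      fun v => (hcontract v).trans (Finset.sum_le_sum fun i _ => ?_)⟩
    · dsimp only
      split_ifs with hi
      exacts [div_pos (hpos hi) (hh i), one_pos]
    · refine (hrow i).imp_left fun hi => ⟨hi, ?_⟩
      dsimp only
      rw [if_pos hi, div_mul_cancel₀ _ (hh i).ne']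
    · dsimp only
      split_ifs with hi
      · have := hpos hi
        have := hh i
        exact le_of_eq (by field_simp)
      · have hi' := (hrow i).resolve_left hi
        simp [mulVec, dotProduct, hi']
  refine .of_nonpos_on_orthogonal hM h fun x hx =>
    dotProduct_mulVec_nonpos_of_generalized_eigenvectors_orthogonal hM hd x fun μ v hμ hv => ?_
  obtain ⟨c, hc⟩ := generalized_eigenvector_eq_smul hM hM0 hh hd hdrow hμ hv (hdM v)
  rw [hc, smul_dotProduct, dotProduct_comm, hx, smul_zero]

end Hyperbolic

namespace Grd

section Language

variable {L : List X → Prop} {α β : List X} {x y z : X}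

/-- Languages closed under taking prefixes. -/
def Hereditary (L : List X → Prop) : Prop :=
  ∀ α β, L (α ++ β) → L α

/-- The interval property of a language. -/
def IntervalProperty (L : List X → Prop) : Prop :=
  ∀ α β γ x, L (α ++ [x]) → L (α ++ β ++ γ ++ [x]) → L (α ++ β ++ [x])

/-- Greedoids, presented by their languages of feasible words. -/
structure IsGreedoid (L : List X → Prop) : Prop where
  nil_mem : L []
  nodup : ∀ α, L α → α.Nodup
  hereditary : Hereditary L
  exchange : ∀ α β, L α → L β → β.length < α.length → ∃ x ∈ α, L (β ++ [x])

omit [DecidableEq X]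

theorem mem_Cnt : x ∈ Cnt L α ↔ L (α ++ [x]) := by
  simp only [Cnt, Finset.mem_filter, Finset.mem_univ, true_and]

theorem Hereditary.mem_Cnt (hL : Hereditary L) (h : L (α ++ x :: β)) : x ∈ Cnt L α :=
  Grd.mem_Cnt.2 (hL _ β (by simpa using h))

theorem IntervalProperty.append_pair (hI : IntervalProperty L) (hz : z ∈ Cnt L α)
    (h : L (α ++ [x, y, z])) : L (α ++ [x, z]) := by
  simpa using hI α [x] [y] z (mem_Cnt.1 hz) (by simpa using h)

/-- The letter from which the continuation `z` of `αx` descends: `z` itself if it is already a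
continuation of `α`, and `x` otherwise. -/
def origin (L : List X → Prop) (α : List X) (x z : X) : X :=
  if L (α ++ [z]) then z else x

theorem origin_of_mem (hz : z ∈ Cnt L α) : origin L α x z = z :=
  if_pos (mem_Cnt.1 hz)

theorem origin_of_notMem (hz : z ∉ Cnt L α) : origin L α x z = x :=
  if_neg (mt mem_Cnt.2 hz)

end Language

section Weight

variable {L : List X → Prop} {p : List X → ℝ} {α : List X} {x y : X}

/-- Nonnegative weights on words that vanish off the language `L`. -/
structure IsWeight (L : List X → Prop) (p : List X → ℝ) : Prop where
  nonneg : ∀ α, 0 ≤ p α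
  eq_zero : ∀ α, ¬ L α → p α = 0

/-- The total weight of the one-letter extensions of a word. It is regarded as a new weight, so
that its iterates are the total weights of the extensions by several letters. -/
def cntSum (p : List X → ℝ) (α : List X) : ℝ :=
  ∑ x, p (α ++ [x])

/-- Interpolation between the weights `p` (at `t = 0`) and `cntSum p` (at `t = 1`). -/
def mixWt (t : ℝ) (p : List X → ℝ) : List X → ℝ :=
  t • cntSum p + (1 - t) • p

/-- Continuation invariance (ContInv) of the weight `p` at the word `α`. -/
def ContInvAt (L : List X → Prop) (p : List X → ℝ) (α : List X) : Prop :=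
  ∀ x ∈ Cnt L α, ∀ y ∈ Cnt L α, ∀ β, p (α ++ [x, y] ++ β) = p (α ++ [y, x] ++ β)

/-- Passive-active monotonicity (PAMon) of the weight `p` at the word `α`. The condition on
extensions by `r` further letters is this one for the weight `cntSum^[r] p`. -/
def PAMonAt (L : List X → Prop) (p : List X → ℝ) (α : List X) : Prop :=
  ∀ x ∈ Cnt L α, ∀ y ∈ Cnt L α, x ≠ y →
    ∑ z ∈ Act L α x y, p (α ++ [x, y, z]) ≤ ∑ z ∈ Pas L α x y, p (α ++ [x, y, z])

theorem sum_wordsLen (f : List X → ℝ) (r : ℕ) :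
    ∑ β ∈ wordsLen X r, f β = ∑ b : Fin r → X, f (List.ofFn b) :=
  Finset.sum_image List.ofFn_injective.injOn

theorem iterate_cntSum (p : List X → ℝ) (r : ℕ) (α : List X) :
    cntSum^[r] p α = ∑ β ∈ wordsLen X r, p (α ++ β) := by
  induction r generalizing α with
  | zero => simp [sum_wordsLen]
  | succ r ih =>
    simp only [Function.iterate_succ_apply', cntSum, ih, sum_wordsLen]
    rw [← Fintype.sum_prod_type', ← (Fin.consEquiv fun _ => X).sum_comp]
    simp [Fin.consEquiv]

theorem Lq_eq_iterate_cntSum (hp : IsWeight L p) (r : ℕ) : Lq L p r = cntSum^[r] p [] := by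
  rw [iterate_cntSum, Lq]
  exact Finset.sum_filter_of_ne fun β _ hβ => not_not.1 (mt (hp.eq_zero β) hβ)

omit [DecidableEq X]

theorem mixWt_apply (t : ℝ) (p : List X → ℝ) (α : List X) :
    mixWt t p α = t * cntSum p α + (1 - t) * p α :=
  rfl

theorem mixWt_zero (p : List X → ℝ) : mixWt 0 p = p := by
  simp [mixWt]

theorem mixWt_one (p : List X → ℝ) : mixWt 1 p = cntSum p := by
  simp [mixWt]

theorem isWeight_cntSum (hL : Hereditary L) (hp : IsWeight L p) : IsWeight L (cntSum p) where
  nonneg _ := Finset.sum_nonneg fun _ _ => hp.nonneg _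
  eq_zero _ hα := Finset.sum_eq_zero fun _ _ => hp.eq_zero _ fun h => hα (hL _ _ h)

theorem isWeight_iterate_cntSum (hL : Hereditary L) (hp : IsWeight L p) (r : ℕ) :
    IsWeight L (cntSum^[r] p) := by
  induction r with
  | zero => exact hp
  | succ r ih => rw [Function.iterate_succ_apply']; exact isWeight_cntSum hL ih

theorem isWeight_mixWt (hL : Hereditary L) (hp : IsWeight L p) {t : ℝ} (h0 : 0 ≤ t) (h1 : t ≤ 1) :
    IsWeight L (mixWt t p) where
  nonneg α := add_nonneg (mul_nonneg h0 ((isWeight_cntSum hL hp).nonneg α))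
    (mul_nonneg (sub_nonneg.2 h1) (hp.nonneg α))
  eq_zero α hα := by
    rw [mixWt_apply, hp.eq_zero α hα, (isWeight_cntSum hL hp).eq_zero α hα, mul_zero, mul_zero,
      add_zero]

theorem mixWt_pos (hL : Hereditary L) (hp : IsWeight L p) {t : ℝ} (h0 : 0 ≤ t) (h1 : t < 1)
    (hα : 0 < p α) : 0 < mixWt t p α :=
  add_pos_of_nonneg_of_pos (mul_nonneg h0 ((isWeight_cntSum hL hp).nonneg α))
    (mul_pos (sub_pos.2 h1) hα)

theorem contInvAt_cntSum (h : ContInvAt L p α) : ContInvAt L (cntSum p) α := fun x hx y hy β =>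
  Finset.sum_congr rfl fun z _ => by simpa using h x hx y hy (β ++ [z])

theorem contInvAt_iterate_cntSum (h : ContInvAt L p α) (r : ℕ) :
    ContInvAt L (cntSum^[r] p) α := by
  induction r with
  | zero => exact h
  | succ r ih => rw [Function.iterate_succ_apply']; exact contInvAt_cntSum ih

theorem contInvAt_mixWt (h : ContInvAt L p α) (t : ℝ) : ContInvAt L (mixWt t p) α :=
  fun x hx y hy β => by
    rw [mixWt_apply, mixWt_apply, h x hx y hy, contInvAt_cntSum h x hx y hy]

theorem iterate_cntSum_pos (hL : IsGreedoid L) (hp : IsWeight L p) (hpos : ∀ α, L α → 0 < p α)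
    {γ : List X} (hγ : L γ) {r : ℕ} (hα : L α) (hr : α.length + r ≤ γ.length) :
    0 < cntSum^[r] p α := by
  induction r generalizing α with
  | zero => exact hpos α hα
  | succ r ih =>
    obtain ⟨x, -, hx⟩ := hL.exchange γ α hγ hα (by omega)
    rw [Function.iterate_succ_apply']
    exact Finset.sum_pos' (fun x _ => (isWeight_iterate_cntSum hL.hereditary hp r).nonneg _)
      ⟨x, Finset.mem_univ x, ih hx (by rw [List.length_append, List.length_singleton]; omega)⟩

end Weight

section Atlas

open Matrix Filter Topology

variable {L : List X → Prop} {p : List X → ℝ} {α : List X} {x y : X}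

/-- The linear functional on `Option X → ℝ` given by the weights of `α` (at `none`) and of its
one-letter extensions. -/
def pairing (p : List X → ℝ) (α : List X) (w : Option X → ℝ) : ℝ :=
  p α * w none + ∑ z, p (α ++ [z]) * w (some z)

/-- The transfer of a vector from `α` to `αx` which assigns to each letter the coordinate of its
origin. -/
def pullback (L : List X → Prop) (α : List X) (x : X) (w : Option X → ℝ) : Option X → ℝ :=
  fun i => w (i.map (origin L α x))

/-- The vector `(1 - t, t, …, t)`, with `1 - t` at `none`. -/
def mixVec (t : ℝ) : Option X → ℝ
  | none => 1 - t
  | some _ => t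

/-- The matrix attached to the word `α` in the combinatorial atlas of the weight `p`; the index
`none` stands for the extra coordinate of the atlas. -/
def atlasMatrix (L : List X → Prop) (p : List X → ℝ) (α : List X) :
    Matrix (Option X) (Option X) ℝ
  | none, none => p α
  | none, some y => p (α ++ [y])
  | some x, none => p (α ++ [x])
  | some x, some y => ∑ z with origin L α x z = y, p (α ++ [x, z])

section Pairing

omit [DecidableEq X]

theorem pairing_mixVec (p : List X → ℝ) (α : List X) (t : ℝ) :
    pairing p α (mixVec t) = mixWt t p α := by
  simp only [pairing, mixVec, mixWt_apply, cntSum, ← Finset.sum_mul]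
  ring

theorem pairing_eq_zero (hL : Hereditary L) (hp : IsWeight L p) (hα : ¬ L α) (w : Option X → ℝ) :
    pairing p α w = 0 := by
  have hα' (z : X) : p (α ++ [z]) = 0 := hp.eq_zero _ fun h => hα (hL _ _ h)
  simp [pairing, hp.eq_zero α hα, hα']

theorem ContInvAt.pairing_comm (h : ContInvAt L p α) (hx : x ∈ Cnt L α) (hy : y ∈ Cnt L α)
    (w : Option X → ℝ) : pairing p (α ++ [x, y]) w = pairing p (α ++ [y, x]) w := by
  have hxy := h x hx y hy []
  rw [List.append_nil, List.append_nil] at hxy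
  simp only [pairing, h x hx y hy, hxy]

omit [Fintype X] in
theorem pullback_mixVec (L : List X → Prop) (α : List X) (x : X) (t : ℝ) :
    pullback L α x (mixVec t) = mixVec t :=
  funext fun i => by cases i <;> rfl

end Pairing

theorem atlasMatrix_mulVec_none (L : List X → Prop) (p : List X → ℝ) (α : List X)
    (w : Option X → ℝ) : (atlasMatrix L p α *ᵥ w) none = pairing p α w := by
  rw [mulVec, dotProduct, Fintype.sum_option]
  rfl

theorem atlasMatrix_mulVec_some (L : List X → Prop) (p : List X → ℝ) (α : List X)
    (w : Option X → ℝ) (x : X) :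
    (atlasMatrix L p α *ᵥ w) (some x) = pairing p (α ++ [x]) (pullback L α x w) := by
  rw [mulVec, dotProduct, Fintype.sum_option, pairing]
  simp only [atlasMatrix, pullback, Option.map_none, Option.map_some, List.append_assoc,
    List.singleton_append]
  rw [← Finset.sum_fiberwise Finset.univ (origin L α x) fun z => _ * w (some (origin L α x z))]
  congr 1
  refine Finset.sum_congr rfl fun y _ => ?_
  rw [Finset.sum_mul]
  exact Finset.sum_congr rfl fun z hz => by rw [(Finset.mem_filter.1 hz).2]

theorem dotProduct_atlasMatrix_mulVec (L : List X → Prop) (p : List X → ℝ) (α : List X)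
    (v w : Option X → ℝ) :
    v ⬝ᵥ atlasMatrix L p α *ᵥ w =
      v none * pairing p α w +
        ∑ x, v (some x) * pairing p (α ++ [x]) (pullback L α x w) := by
  simp only [dotProduct, Fintype.sum_option, atlasMatrix_mulVec_none, atlasMatrix_mulVec_some]

theorem dotProduct_atlasMatrix_mulVec_mixVec (L : List X → Prop) (p : List X → ℝ) (α : List X)
    (v : Option X → ℝ) (t : ℝ) :
    v ⬝ᵥ atlasMatrix L p α *ᵥ mixVec t = pairing (mixWt t p) α v := by
  simp only [dotProduct_atlasMatrix_mulVec, pullback_mixVec, pairing_mixVec]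
  simp only [pairing, mul_comm (mixWt t p _)]

theorem mixVec_dotProduct_atlasMatrix_mulVec_mixVec (L : List X → Prop) (p : List X → ℝ)
    (α : List X) (s t : ℝ) :
    mixVec s ⬝ᵥ atlasMatrix L p α *ᵥ mixVec t = mixWt s (mixWt t p) α := by
  rw [dotProduct_atlasMatrix_mulVec_mixVec, pairing_mixVec]

theorem atlasMatrix_mixWt (L : List X → Prop) (p : List X → ℝ) (α : List X) (t : ℝ) :
    atlasMatrix L (mixWt t p) α =
      t • atlasMatrix L (cntSum p) α + (1 - t) • atlasMatrix L p α := by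
  ext (_ | x) (_ | y)
  all_goals
    simp only [atlasMatrix, Matrix.add_apply, Matrix.smul_apply, smul_eq_mul, mixWt_apply,
      Finset.sum_add_distrib, Finset.mul_sum]

theorem atlasMatrix_nonneg (hp : IsWeight L p) : ∀ i j, 0 ≤ atlasMatrix L p α i j
  | none, none => hp.nonneg _
  | none, some _ => hp.nonneg _
  | some _, none => hp.nonneg _
  | some _, some _ => Finset.sum_nonneg fun _ _ => hp.nonneg _

theorem atlasMatrix_some_eq_zero (hL : Hereditary L) (hp : IsWeight L p) (hx : x ∉ Cnt L α) :
    ∀ j, atlasMatrix L p α (some x) j = 0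
  | none => hp.eq_zero _ (mt mem_Cnt.2 hx)
  | some _ => Finset.sum_eq_zero fun _ _ => hp.eq_zero _ (mt hL.mem_Cnt hx)

theorem atlasMatrix_some_some_of_ne (hL : Hereditary L) (hp : IsWeight L p) (hxy : x ≠ y) :
    atlasMatrix L p α (some x) (some y) =
      if x ∈ Cnt L α ∧ y ∈ Cnt L α then p (α ++ [x, y]) else 0 := by
  by_cases hx : x ∈ Cnt L α
  · simp only [atlasMatrix, hx, true_and]
    rw [Finset.sum_filter, Finset.sum_eq_single y]
    · split_ifs with h₁ h₂ h₂
      · rfl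
      · exact absurd ((origin_of_notMem h₂).symm.trans h₁) hxy
      · exact absurd (origin_of_mem h₂) h₁
      · rfl
    · intro z _ hzy
      refine if_neg fun hz => ?_
      rw [origin] at hz
      split_ifs at hz
      exacts [hzy hz, hxy hz]
    · exact fun hy => absurd (Finset.mem_univ y) hy
  · rw [if_neg fun h => hx h.1, atlasMatrix_some_eq_zero hL hp hx]

theorem atlasMatrix_isSymm (hL : Hereditary L) (hp : IsWeight L p) (h : ContInvAt L p α) :
    (atlasMatrix L p α).IsSymm := by
  refine Matrix.IsSymm.ext fun i j => ?_
  rcases i with _ | x <;> rcases j with _ | y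
  · rfl
  · rfl
  · rfl
  · rcases eq_or_ne x y with rfl | hxy
    · rfl
    · rw [atlasMatrix_some_some_of_ne hL hp hxy, atlasMatrix_some_some_of_ne hL hp hxy.symm]
      simp only [and_comm (a := x ∈ Cnt L α)]
      split_ifs with hmem
      · simpa using h y hmem.1 x hmem.2 []
      · rfl

omit [DecidableEq X] in
theorem sum_pairing_pullback (hL : Hereditary L) (hp : IsWeight L p) (h : ContInvAt L p α)
    (v : Option X → ℝ) :
    ∑ x, pairing p (α ++ [x]) (pullback L α x v) = pairing (cntSum p) α v := by
  calc ∑ x, pairing p (α ++ [x]) (pullback L α x v)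
      = mixVec 1 ⬝ᵥ atlasMatrix L p α *ᵥ v := by
        simp [dotProduct_atlasMatrix_mulVec, mixVec]
    _ = v ⬝ᵥ atlasMatrix L p α *ᵥ mixVec 1 :=
        dotProduct_mulVec_comm (atlasMatrix_isSymm hL hp h) _ _
    _ = pairing (cntSum p) α v := by rw [dotProduct_atlasMatrix_mulVec_mixVec, mixWt_one]

theorem pullback_pullback_sub_pullback_pullback (hI : IntervalProperty L) (hx : x ∈ Cnt L α)
    (hy : y ∈ Cnt L α) {z : X} (hxyz : L (α ++ [x, y, z])) (hyxz : L (α ++ [y, x, z]))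
    (v : Option X → ℝ) :
    pullback L (α ++ [x]) y (pullback L α x v) (some z) -
        pullback L (α ++ [y]) x (pullback L α y v) (some z) =
      (v (some y) - v (some x)) *
        ((if z ∈ Pas L α x y then 1 else 0) - if z ∈ Act L α x y then 1 else 0) := by
  have hx' := mem_Cnt.1 hx
  have hy' := mem_Cnt.1 hy
  by_cases hz : z ∈ Cnt L α
  · have hxz := hI.append_pair hz hxyz
    have hyz := hI.append_pair hz hyxz
    simp [pullback, origin, Pas, Act, mem_Cnt.1 hz, hxz, hyz]
  · have hz' := mt mem_Cnt.2 hz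
    by_cases hxz : L (α ++ [x, z]) <;> by_cases hyz : L (α ++ [y, z]) <;>
      simp [pullback, origin, Pas, Act, hz', hx', hy', hxz, hyz, hxyz]

omit [DecidableEq X] in
theorem pairing_pullback_sub_pairing_pullback (hI : IntervalProperty L) (hp : IsWeight L p)
    (h : ContInvAt L p α) (hx : x ∈ Cnt L α) (hy : y ∈ Cnt L α) (v : Option X → ℝ) :
    pairing p (α ++ [x, y]) (pullback L (α ++ [x]) y (pullback L α x v)) -
        pairing p (α ++ [x, y]) (pullback L (α ++ [y]) x (pullback L α y v)) =
      (v (some y) - v (some x)) *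
        (∑ z ∈ Pas L α x y, p (α ++ [x, y, z]) - ∑ z ∈ Act L α x y, p (α ++ [x, y, z])) := by
  have hPas : ∑ z ∈ Pas L α x y, p (α ++ [x, y, z]) =
      ∑ z, p (α ++ [x, y, z]) * if z ∈ Pas L α x y then 1 else 0 := by
    simp
  have hAct : ∑ z ∈ Act L α x y, p (α ++ [x, y, z]) =
      ∑ z, p (α ++ [x, y, z]) * if z ∈ Act L α x y then 1 else 0 := by
    simp
  rw [hPas, hAct, ← Finset.sum_sub_distrib, Finset.mul_sum, pairing, pairing,
    add_sub_add_comm, ← Finset.sum_sub_distrib]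
  refine (add_eq_right.2 (sub_self _)).trans (Finset.sum_congr rfl fun z _ => ?_)
  rw [List.append_assoc, List.cons_append, List.cons_append, List.nil_append]
  have hswap : p (α ++ [x, y, z]) = p (α ++ [y, x, z]) := by simpa using h x hx y hy [z]
  rcases eq_or_ne (p (α ++ [x, y, z])) 0 with hz | hz
  · simp [hz]
  · have hxyz : L (α ++ [x, y, z]) := not_not.1 (mt (hp.eq_zero _) hz)
    have hyxz : L (α ++ [y, x, z]) := not_not.1 (mt (hp.eq_zero _) (hswap ▸ hz))
    linear_combination p (α ++ [x, y, z]) *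
      pullback_pullback_sub_pullback_pullback hI hx hy hxyz hyxz v

omit [DecidableEq X] in
theorem sum_sub_mul_pairing_pullback_nonneg (hI : IntervalProperty L) (hp : IsWeight L p)
    (h : ContInvAt L p α) (hPA : PAMonAt L p α) (v : Option X → ℝ) :
    0 ≤ ∑ x ∈ Cnt L α, ∑ y ∈ Cnt L α, (v (some y) - v (some x)) *
      pairing p (α ++ [x, y]) (pullback L (α ++ [x]) y (pullback L α x v)) := by
  set F : X → X → ℝ := fun x y => (v (some y) - v (some x)) *
    pairing p (α ++ [x, y]) (pullback L (α ++ [x]) y (pullback L α x v)) with hF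
  have hswap : ∑ x ∈ Cnt L α, ∑ y ∈ Cnt L α, F x y = ∑ x ∈ Cnt L α, ∑ y ∈ Cnt L α, F y x :=
    Finset.sum_comm
  have hadd : 0 ≤ ∑ x ∈ Cnt L α, ∑ y ∈ Cnt L α, (F x y + F y x) := by
    refine Finset.sum_nonneg fun x hx => Finset.sum_nonneg fun y hy => ?_
    have hFF : F x y + F y x = (v (some y) - v (some x)) ^ 2 *
        (∑ z ∈ Pas L α x y, p (α ++ [x, y, z]) - ∑ z ∈ Act L α x y, p (α ++ [x, y, z])) := by
      have hsub := pairing_pullback_sub_pairing_pullback hI hp h hx hy v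
      simp only [hF, h.pairing_comm hy hx]
      linear_combination (v (some y) - v (some x)) * hsub
    rw [hFF]
    rcases eq_or_ne x y with rfl | hxy
    · simp
    · exact mul_nonneg (sq_nonneg _) (sub_nonneg.2 (hPA x hx y hy hxy))
  simp only [Finset.sum_add_distrib] at hadd
  linarith

theorem dotProduct_atlasMatrix_cntSum_mulVec_le (hL : Hereditary L) (hI : IntervalProperty L)
    (hp : IsWeight L p) (h : ContInvAt L p α) (h' : ∀ x ∈ Cnt L α, ContInvAt L p (α ++ [x]))
    (hPA : PAMonAt L p α) (v : Option X → ℝ) :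
    v ⬝ᵥ atlasMatrix L (cntSum p) α *ᵥ v ≤
      ∑ x, pullback L α x v ⬝ᵥ atlasMatrix L p (α ++ [x]) *ᵥ pullback L α x v := by
  set G : X → X → ℝ := fun x y =>
    pairing p (α ++ [x, y]) (pullback L (α ++ [x]) y (pullback L α x v)) with hG
  have hG0 {x y : X} (hx : x ∉ Cnt L α) : G x y = 0 :=
    pairing_eq_zero hL hp (mt hL.mem_Cnt hx) _
  have hrow (x : X) :
      v (some x) * pairing (cntSum p) (α ++ [x]) (pullback L α x v) =
        ∑ y, v (some x) * G x y := by
    by_cases hx : x ∈ Cnt L α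
    · rw [← sum_pairing_pullback hL hp (h' x hx), Finset.mul_sum]
      simp only [hG, List.append_assoc, List.singleton_append]
    · rw [pairing_eq_zero hL (isWeight_cntSum hL hp) (mt mem_Cnt.2 hx)]
      simp [hG0 hx]
  have hcore : ∑ x, ∑ y, (v (some (origin L α x y)) - v (some x)) * G x y =
      ∑ x ∈ Cnt L α, ∑ y ∈ Cnt L α, (v (some y) - v (some x)) * G x y := by
    refine (Finset.sum_subset_zero_on_sdiff (Finset.subset_univ _) (fun x hx => ?_)
      fun x _ => ?_).symm
    · exact Finset.sum_eq_zero fun y _ => by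
        rw [hG0 (Finset.mem_sdiff.1 hx).2, mul_zero]
    · refine Finset.sum_subset_zero_on_sdiff (Finset.subset_univ _) (fun y hy => ?_)
        fun y hy => ?_
      · rw [origin_of_notMem (Finset.mem_sdiff.1 hy).2, sub_self, zero_mul]
      · rw [origin_of_mem hy]
  have hnonneg := hcore.trans_ge (sum_sub_mul_pairing_pullback_nonneg hI hp h hPA v)
  simp only [dotProduct_atlasMatrix_mulVec, hrow, ← sum_pairing_pullback hL hp h,
    Finset.sum_add_distrib, List.append_assoc, List.singleton_append]
  simp only [sub_mul, Finset.sum_sub_distrib, Finset.mul_sum] at hnonneg ⊢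
  exact add_le_add_right (sub_nonneg.1 hnonneg) _

theorem atlasMatrix_mixWt_mulVec_none (L : List X → Prop) (p : List X → ℝ) (α : List X) (t : ℝ)
    (v : Option X → ℝ) :
    (atlasMatrix L (mixWt t p) α *ᵥ v) none = v ⬝ᵥ atlasMatrix L p α *ᵥ mixVec t := by
  rw [atlasMatrix_mulVec_none, dotProduct_atlasMatrix_mulVec_mixVec]

theorem atlasMatrix_mixWt_mulVec_some (L : List X → Prop) (p : List X → ℝ) (α : List X) (t : ℝ)
    (v : Option X → ℝ) (x : X) :
    (atlasMatrix L (mixWt t p) α *ᵥ v) (some x) =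
      pullback L α x v ⬝ᵥ atlasMatrix L p (α ++ [x]) *ᵥ mixVec t := by
  rw [atlasMatrix_mulVec_some, dotProduct_atlasMatrix_mulVec_mixVec]

theorem dotProduct_atlasMatrix_mulVec_le_div (hL : Hereditary L) (hp : IsWeight L p)
    (hα : 0 < p α) (hyp : Hyperbolic (atlasMatrix L p α)) {t : ℝ} (h0 : 0 ≤ t) (h1 : t < 1)
    (v : Option X → ℝ) :
    v ⬝ᵥ atlasMatrix L p α *ᵥ v ≤
      (v ⬝ᵥ atlasMatrix L p α *ᵥ mixVec t) ^ 2 /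
        (mixVec t ⬝ᵥ atlasMatrix L p α *ᵥ mixVec t) := by
  have hpos : 0 < mixVec t ⬝ᵥ atlasMatrix L p α *ᵥ mixVec t := by
    rw [mixVec_dotProduct_atlasMatrix_mulVec_mixVec]
    exact mixWt_pos hL (isWeight_mixWt hL hp h0 h1.le) h0 h1 (mixWt_pos hL hp h0 h1 hα)
  exact (le_div_iff₀ hpos).2 (hyp v _ hpos)

theorem dotProduct_atlasMatrix_mixWt_mulVec_le (hL : Hereditary L) (hp : IsWeight L p)
    (hα : 0 < p α) (hα' : ∀ x ∈ Cnt L α, 0 < p (α ++ [x]))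
    (hyp : Hyperbolic (atlasMatrix L p α))
    (hyp' : ∀ x ∈ Cnt L α, Hyperbolic (atlasMatrix L p (α ++ [x])))
    (v : Option X → ℝ) (hpull : v ⬝ᵥ atlasMatrix L (cntSum p) α *ᵥ v ≤
      ∑ x, pullback L α x v ⬝ᵥ atlasMatrix L p (α ++ [x]) *ᵥ pullback L α x v)
    {t : ℝ} (h0 : 0 ≤ t) (h1 : t < 1) :
    v ⬝ᵥ atlasMatrix L (mixWt t p) α *ᵥ v ≤
      ∑ i, mixVec t i * ((atlasMatrix L (mixWt t p) α *ᵥ v) i ^ 2 /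
        (atlasMatrix L (mixWt t p) α *ᵥ mixVec t) i) := by
  have hform : v ⬝ᵥ atlasMatrix L (mixWt t p) α *ᵥ v =
      (1 - t) * (v ⬝ᵥ atlasMatrix L p α *ᵥ v) +
        t * (v ⬝ᵥ atlasMatrix L (cntSum p) α *ᵥ v) := by
    rw [atlasMatrix_mixWt, add_mulVec, smul_mulVec, smul_mulVec, dotProduct_add, dotProduct_smul,
      dotProduct_smul, add_comm]
    rfl
  have hsome (x : X) : pullback L α x v ⬝ᵥ atlasMatrix L p (α ++ [x]) *ᵥ pullback L α x v ≤
      (atlasMatrix L (mixWt t p) α *ᵥ v) (some x) ^ 2 /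
        (atlasMatrix L (mixWt t p) α *ᵥ mixVec t) (some x) := by
    rw [atlasMatrix_mixWt_mulVec_some, atlasMatrix_mixWt_mulVec_some, pullback_mixVec]
    by_cases hx : x ∈ Cnt L α
    · exact dotProduct_atlasMatrix_mulVec_le_div hL hp (hα' x hx) (hyp' x hx) h0 h1 _
    · have hzero (y : X) (w : Option X → ℝ) : pairing p (α ++ [x, y]) w = 0 :=
        pairing_eq_zero hL hp (mt hL.mem_Cnt hx) w
      simp [dotProduct_atlasMatrix_mulVec, pairing_eq_zero hL hp (mt mem_Cnt.2 hx), hzero]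
  rw [hform, Fintype.sum_option, atlasMatrix_mixWt_mulVec_none, atlasMatrix_mixWt_mulVec_none]
  refine add_le_add (mul_le_mul_of_nonneg_left ?_ (sub_nonneg.2 h1.le)) ?_
  · exact dotProduct_atlasMatrix_mulVec_le_div hL hp hα hyp h0 h1 v
  · simp only [mixVec, ← Finset.mul_sum]
    exact mul_le_mul_of_nonneg_left (hpull.trans (Finset.sum_le_sum fun x _ => hsome x)) h0

theorem hyperbolic_atlasMatrix_cntSum (hL : Hereditary L) (hI : IntervalProperty L)
    (hp : IsWeight L p) (h : ContInvAt L p α) (h' : ∀ x ∈ Cnt L α, ContInvAt L p (α ++ [x]))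
    (hPA : PAMonAt L p α) (hα : 0 < p α) (hα' : ∀ x ∈ Cnt L α, 0 < p (α ++ [x]))
    (hyp : Hyperbolic (atlasMatrix L p α))
    (hyp' : ∀ x ∈ Cnt L α, Hyperbolic (atlasMatrix L p (α ++ [x]))) :
    Hyperbolic (atlasMatrix L (cntSum p) α) := by
  have hmix (t : ℝ) (ht : t ∈ Set.Ioo 0 1) : Hyperbolic (atlasMatrix L (mixWt t p) α) := by
    have hwt := isWeight_mixWt hL hp ht.1.le ht.2.le
    have hvec : ∀ i : Option X, 0 < mixVec t i
      | none => sub_pos.2 ht.2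
      | some _ => ht.1
    have hrow : ∀ i, 0 < atlasMatrix L (mixWt t p) α none i ∨
        ∀ j, atlasMatrix L (mixWt t p) α i j = 0
      | none => .inl (mixWt_pos hL hp ht.1.le ht.2 hα)
      | some x => (em (x ∈ Cnt L α)).imp (fun hx => mixWt_pos hL hp ht.1.le ht.2 (hα' x hx))
          (atlasMatrix_some_eq_zero hL hwt)
    exact .of_contraction (atlasMatrix_isSymm hL hwt (contInvAt_mixWt h t))
      (atlasMatrix_nonneg hwt) hvec hrow fun v =>
        dotProduct_atlasMatrix_mixWt_mulVec_le hL hp hα hα' hyp hyp' v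
          (dotProduct_atlasMatrix_cntSum_mulVec_le hL hI hp h h' hPA v) ht.1.le ht.2
  have hlim : Tendsto (fun t : ℝ => atlasMatrix L (mixWt t p) α) (𝓝[<] 1)
      (𝓝 (atlasMatrix L (cntSum p) α)) := by
    have hcont : Continuous fun t : ℝ =>
        t • atlasMatrix L (cntSum p) α + (1 - t) • atlasMatrix L p α := by fun_prop
    simpa [atlasMatrix_mixWt] using (hcont.tendsto 1).mono_left nhdsWithin_le_nhds
  exact .of_tendsto hlim (eventually_of_mem (Ioo_mem_nhdsLT one_pos) hmix)

theorem hyperbolic_atlasMatrix_iterate_cntSum {k : ℕ} (hL : Hereditary L)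
    (hI : IntervalProperty L) (hp : IsWeight L p)
    (hcont : ∀ α, L α → α.length < k → ContInvAt L p α)
    (hPA : ∀ α, L α → α.length < k → ∀ r, PAMonAt L (cntSum^[r] p) α)
    (hpos : ∀ r α, L α → α.length + r < k → 0 < cntSum^[r] p α)
    (hyp : ∀ α, L α → α.length < k → Hyperbolic (atlasMatrix L p α)) {r : ℕ}
    (hα : L α) (hr : α.length + r < k) : Hyperbolic (atlasMatrix L (cntSum^[r] p) α) := by
  induction r generalizing α with
  | zero => exact hyp α hα hr
  | succ r ih =>
    have hlen (x : X) : (α ++ [x]).length + r < k := by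
      rw [List.length_append, List.length_singleton]; omega
    rw [Function.iterate_succ_apply']
    refine hyperbolic_atlasMatrix_cntSum hL hI (isWeight_iterate_cntSum hL hp r)
      (contInvAt_iterate_cntSum (hcont α hα (by omega)) r)
      (fun x hx => contInvAt_iterate_cntSum (hcont _ (mem_Cnt.1 hx) ?_) r)
      (hPA α hα (by omega) r) (hpos r α hα (by omega))
      (fun x hx => hpos r _ (mem_Cnt.1 hx) (hlen x)) (ih hα (by omega))
      fun x hx => ih (mem_Cnt.1 hx) (hlen x)
    exact (Nat.le_add_right _ r).trans_lt (hlen x)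

theorem mul_cntSum_cntSum_le_sq (hyp : Hyperbolic (atlasMatrix L p α)) (hα : 0 < p α) :
    p α * cntSum (cntSum p) α ≤ cntSum p α ^ 2 := by
  have hquad := hyp (mixVec 1) (mixVec 0)
  simp only [mixVec_dotProduct_atlasMatrix_mulVec_mixVec, mixWt_zero, mixWt_one] at hquad
  rw [mul_comm]
  exact hquad hα

end Atlas

section Parallel

variable {L : List X → Prop} {α : List X} {x y z : X} {C : Finset X}

omit [DecidableEq X] in
theorem IsGreedoid.append_pair_or (hL : IsGreedoid L) (hy : y ∈ Cnt L α)
    (h : L (α ++ [x, z])) : L (α ++ [y, x]) ∨ L (α ++ [y, z]) := by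
  obtain ⟨w, hw, hyw⟩ := hL.exchange _ _ h (mem_Cnt.1 hy) (by simp)
  rw [List.append_assoc, List.singleton_append] at hyw
  have hwα : w ∉ α := fun hwα =>
    (((List.nodup_append.1 (hL.nodup _ hyw)).2.2 w hwα) w (by simp)) rfl
  have hwxz : w = x ∨ w = z := by simpa [hwα] using hw
  rcases hwxz with rfl | rfl
  exacts [.inl hyw, .inr hyw]

omit [Fintype X] [DecidableEq X] in
theorem IsGreedoid.not_append_pair_self (hL : IsGreedoid L) : ¬ L (α ++ [x, x]) := fun h => by
  simpa [List.nodup_append] using hL.nodup _ h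

omit [DecidableEq X] in
theorem IsGreedoid.append_pair_swap (hL : IsGreedoid L) (hy : y ∈ Cnt L α)
    (h : L (α ++ [x, y])) : L (α ++ [y, x]) :=
  (hL.append_pair_or hy h).resolve_right hL.not_append_pair_self

theorem mem_parClass (hL : IsGreedoid L) :
    y ∈ parClass L α x ↔ y ∈ Cnt L α ∧ ¬ L (α ++ [x, y]) := by
  rw [parClass, Finset.mem_filter]
  refine and_congr_right fun _ => or_iff_right_of_imp ?_
  rintro rfl
  exact hL.not_append_pair_self

theorem parClass_eq_of_mem (hL : IsGreedoid L) (hx : x ∈ Cnt L α) (hy : y ∈ parClass L α x) :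
    parClass L α y = parClass L α x := by
  obtain ⟨hyα, hxy⟩ := (mem_parClass hL).1 hy
  have hyx : ¬ L (α ++ [y, x]) := mt (hL.append_pair_swap hx) hxy
  ext z
  simp only [mem_parClass hL]
  refine and_congr_right fun _ => not_congr ⟨fun hz => ?_, fun hz => ?_⟩
  · exact (hL.append_pair_or hx hz).resolve_left hxy
  · exact (hL.append_pair_or hyα hz).resolve_left hyx

theorem mem_Cnt_of_mem_Par (hC : C ∈ Par L α) (hx : x ∈ C) : x ∈ Cnt L α := by
  obtain ⟨y, -, rfl⟩ := Finset.mem_image.1 hC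
  exact Finset.mem_of_mem_filter x hx

theorem parClass_eq_of_mem_Par (hL : IsGreedoid L) (hC : C ∈ Par L α) (hx : x ∈ C) :
    parClass L α x = C := by
  obtain ⟨y, hy, rfl⟩ := Finset.mem_image.1 hC
  exact parClass_eq_of_mem hL hy hx

theorem mem_parClass_self (hx : x ∈ Cnt L α) : x ∈ parClass L α x :=
  Finset.mem_filter.2 ⟨hx, .inl rfl⟩

theorem sum_Par_sum (hL : IsGreedoid L) (f : X → ℝ) :
    ∑ C ∈ Par L α, ∑ x ∈ C, f x = ∑ x ∈ Cnt L α, f x := by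
  rw [← Finset.sum_fiberwise_of_maps_to fun x hx => Finset.mem_image_of_mem (parClass L α) hx]
  refine Finset.sum_congr rfl fun C hC => Finset.sum_congr (Finset.ext fun x => ?_) fun _ _ => rfl
  rw [Finset.mem_filter]
  constructor
  · exact fun hx => ⟨mem_Cnt_of_mem_Par hC hx, parClass_eq_of_mem_Par hL hC hx⟩
  · rintro ⟨hx, rfl⟩
    exact mem_parClass_self hx

end Parallel

section LogModular

open Matrix

variable {L : List X → Prop} {p q : List X → ℝ} {c : ℕ → ℝ} {α : List X} {x : X} {C : Finset X}

/-- Log-modularity (LogMod) of the weight `p` at the word `α`. -/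
def LogModAt (L : List X → Prop) (p : List X → ℝ) (α : List X) : Prop :=
  ∀ x ∈ Cnt L α, ∀ y ∈ Cnt L α, L (α ++ [x, y]) →
    p (α ++ [x]) * p (α ++ [y]) = p α * p (α ++ [x, y])

/-- The condition (FewDes) at the word `α`: only singleton parallel classes have descendants. -/
def FewDesAt (L : List X → Prop) (α : List X) : Prop :=
  ∀ C ∈ Par L α, 2 ≤ C.card → ∀ x ∈ C, Des L α x = ∅

/-- Syntactic monotonicity (SynMon) of the weight `p` at the word `α`. -/
def SynMonAt (L : List X → Prop) (p : List X → ℝ) (α : List X) : Prop :=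
  ∀ x ∈ Cnt L α, ∑ y ∈ Des L α x, p α * p (α ++ [x, y]) ≤ p (α ++ [x]) ^ 2

/-- Scale monotonicity (ScaleMon) of the weight `q` with scale sequence `c` at the word `α`. -/
def ScaleMonAt (L : List X → Prop) (q : List X → ℝ) (c : ℕ → ℝ) (α : List X) : Prop :=
  c α.length * c (α.length + 2) ≤ c (α.length + 1) ^ 2 ∨
    (∀ C ∈ Par L α, bClass L q c α C < 1) ∧
      (1 - c (α.length + 1) ^ 2 / (c α.length * c (α.length + 2))) *
        ∑ C ∈ Par L α, 1 / (1 - bClass L q c α C) ≤ 1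

theorem mul_sq_sum_le_sum_mul_sq {ι : Type*} {P : Finset ι} {b : ι → ℝ} {s : ℝ}
    (hb : ∀ i ∈ P, b i ≤ 1)
    (hs : 1 ≤ s ∨ (∀ i ∈ P, b i < 1) ∧ (1 - s) * ∑ i ∈ P, 1 / (1 - b i) ≤ 1) (S : ι → ℝ) :
    (1 - s) * (∑ i ∈ P, S i) ^ 2 ≤ ∑ i ∈ P, (1 - b i) * S i ^ 2 := by
  have hterm (i : ι) (hi : i ∈ P) : 0 ≤ (1 - b i) * S i ^ 2 :=
    mul_nonneg (sub_nonneg.2 (hb i hi)) (sq_nonneg _)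
  have hnonneg := Finset.sum_nonneg hterm
  rcases le_or_gt 1 s with h1 | h1
  · exact (mul_nonpos_of_nonpos_of_nonneg (sub_nonpos.2 h1) (sq_nonneg _)).trans hnonneg
  obtain ⟨hlt, hsum⟩ := hs.resolve_left h1.not_ge
  have hcauchy : (∑ i ∈ P, S i) ^ 2 ≤
      (∑ i ∈ P, 1 / (1 - b i)) * ∑ i ∈ P, (1 - b i) * S i ^ 2 := by
    refine Finset.sum_sq_le_sum_mul_sum_of_sq_le_mul _
      (fun i hi => one_div_nonneg.2 (sub_nonneg.2 (hb i hi))) hterm fun i hi => ?_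
    have := (sub_pos.2 (hlt i hi)).ne'
    exact le_of_eq (by field_simp)
  calc (1 - s) * (∑ i ∈ P, S i) ^ 2
      ≤ (1 - s) * ((∑ i ∈ P, 1 / (1 - b i)) * ∑ i ∈ P, (1 - b i) * S i ^ 2) :=
        mul_le_mul_of_nonneg_left hcauchy (sub_pos.2 h1).le
    _ = (1 - s) * (∑ i ∈ P, 1 / (1 - b i)) * ∑ i ∈ P, (1 - b i) * S i ^ 2 :=
        (mul_assoc _ _ _).symm
    _ ≤ ∑ i ∈ P, (1 - b i) * S i ^ 2 := mul_le_of_le_one_left hnonneg hsum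

theorem mul_sum_mul_origin (hL : IsGreedoid L) (hp : IsWeight L p) (h : LogModAt L p α)
    (hx : x ∈ Cnt L α) (u : X → ℝ) :
    p α * ∑ z, p (α ++ [x, z]) * u (origin L α x z) =
      p (α ++ [x]) *
          (∑ z ∈ Cnt L α, p (α ++ [z]) * u z - ∑ z ∈ parClass L α x, p (α ++ [z]) * u z) +
        u x * ∑ z ∈ Des L α x, p α * p (α ++ [x, z]) := by
  have hpar : parClass L α x = (Cnt L α).filter fun z => ¬ L (α ++ [x, z]) := by
    ext z
    rw [mem_parClass hL, Finset.mem_filter]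
  rw [hpar, ← Finset.sum_filter_add_sum_filter_not (Cnt L α) fun z => L (α ++ [x, z]),
    add_sub_cancel_right]
  simp only [Cnt, Des, Finset.filter_filter, Finset.sum_filter, Finset.mul_sum]
  rw [← Finset.sum_add_distrib]
  refine Finset.sum_congr rfl fun z _ => ?_
  by_cases hxz : L (α ++ [x, z])
  · by_cases hz : L (α ++ [z])
    · simp only [origin, hxz, hz, and_self, if_true, not_true_eq_false, and_false, if_false]
      linear_combination -u z * h x hx z (mem_Cnt.2 hz) hxz
    · simp only [origin, hxz, hz, not_false_eq_true, and_self, false_and, if_true, if_false]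
      ring
  · simp [hp.eq_zero _ hxz, hxz]

theorem sum_sq_mul_sum_Des (hFew : FewDesAt L α)
    (hpos : ∀ x ∈ Cnt L α, 0 < scaledWt q c (α ++ [x])) (hC : C ∈ Par L α) (u : X → ℝ) :
    ∑ x ∈ C, u x ^ 2 * ∑ y ∈ Des L α x, scaledWt q c α * scaledWt q c (α ++ [x, y]) =
      bClass L q c α C * (∑ x ∈ C, scaledWt q c (α ++ [x]) * u x) ^ 2 := by
  rw [bClass]
  split_ifs with hcard
  · obtain ⟨x, rfl⟩ := Finset.card_eq_one.1 hcard
    have hx := (hpos x (mem_Cnt_of_mem_Par hC (Finset.mem_singleton_self x))).ne'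
    simp only [Finset.sum_singleton, ← Finset.sum_div]
    field_simp
  · rw [zero_mul]
    refine Finset.sum_eq_zero fun x hx => ?_
    have hcard_pos := Finset.card_pos.2 ⟨x, hx⟩
    rw [hFew C hC (by omega) x hx, Finset.sum_empty, mul_zero]

theorem bClass_le_one (hSyn : SynMonAt L (scaledWt q c) α) (hC : C ∈ Par L α) :
    bClass L q c α C ≤ 1 := by
  rw [bClass]
  split_ifs with hcard
  · obtain ⟨x, rfl⟩ := Finset.card_eq_one.1 hcard
    rw [Finset.sum_singleton, ← Finset.sum_div]
    exact div_le_one_of_le₀ (hSyn x (mem_Cnt_of_mem_Par hC (Finset.mem_singleton_self x)))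
      (sq_nonneg _)
  · exact zero_le_one

theorem scaledWt_mul_sum_mul_sum_origin (hL : IsGreedoid L) (hω : IsWeight L (scaledWt q c))
    (hpos : ∀ x ∈ Cnt L α, 0 < scaledWt q c (α ++ [x])) (hLog : LogModAt L (scaledWt q c) α)
    (hFew : FewDesAt L α) (u : X → ℝ) :
    scaledWt q c α *
        ∑ x ∈ Cnt L α, u x * ∑ z, scaledWt q c (α ++ [x, z]) * u (origin L α x z) =
      (∑ x ∈ Cnt L α, scaledWt q c (α ++ [x]) * u x) ^ 2 -
        ∑ C ∈ Par L α,
          (1 - bClass L q c α C) * (∑ x ∈ C, scaledWt q c (α ++ [x]) * u x) ^ 2 := by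
  set U : X → ℝ := fun x => scaledWt q c (α ++ [x]) * u x
  set D : X → ℝ := fun x => ∑ y ∈ Des L α x, scaledWt q c α * scaledWt q c (α ++ [x, y])
  have hrow (x : X) (hx : x ∈ Cnt L α) :
      scaledWt q c α * (u x * ∑ z, scaledWt q c (α ++ [x, z]) * u (origin L α x z)) =
        U x * ∑ z ∈ Cnt L α, U z - U x * ∑ z ∈ parClass L α x, U z + u x ^ 2 * D x := by
    linear_combination u x * mul_sum_mul_origin hL hω hLog hx u
  have hpar : ∑ x ∈ Cnt L α, U x * ∑ z ∈ parClass L α x, U z =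
      ∑ C ∈ Par L α, (∑ x ∈ C, U x) ^ 2 := by
    rw [← sum_Par_sum hL]
    refine Finset.sum_congr rfl fun C hC => ?_
    rw [sq, Finset.sum_mul]
    exact Finset.sum_congr rfl fun x hx => by rw [parClass_eq_of_mem_Par hL hC hx]
  have hdes : ∑ x ∈ Cnt L α, u x ^ 2 * D x =
      ∑ C ∈ Par L α, bClass L q c α C * (∑ x ∈ C, U x) ^ 2 := by
    rw [← sum_Par_sum hL]
    exact Finset.sum_congr rfl fun C hC => sum_sq_mul_sum_Des hFew hpos hC u
  rw [Finset.mul_sum, Finset.sum_congr rfl hrow, Finset.sum_add_distrib, Finset.sum_sub_distrib,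
    ← Finset.sum_mul, hpar, hdes]
  simp only [sub_mul, one_mul, Finset.sum_sub_distrib]
  ring

theorem mul_sum_mul_sum_origin_le_sq (hL : IsGreedoid L) (hq : IsWeight L q)
    (hpos : ∀ x ∈ Cnt L α, 0 < q (α ++ [x])) (hc : ∀ i, 0 < c i)
    (hLog : LogModAt L (scaledWt q c) α) (hFew : FewDesAt L α)
    (hSyn : SynMonAt L (scaledWt q c) α) (hScale : ScaleMonAt L q c α) (u : X → ℝ) :
    q α * ∑ x ∈ Cnt L α, u x * ∑ z, q (α ++ [x, z]) * u (origin L α x z) ≤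
      (∑ x ∈ Cnt L α, q (α ++ [x]) * u x) ^ 2 := by
  set c₀ := c α.length
  set c₁ := c (α.length + 1)
  set c₂ := c (α.length + 2)
  have h₀ : 0 < c₀ := hc _
  have h₁ : 0 < c₁ := hc _
  have h₂ : 0 < c₂ := hc _
  have hω : IsWeight L (scaledWt q c) :=
    ⟨fun β => div_nonneg (hq.nonneg β) (hc _).le, fun β hβ => by
      rw [scaledWt, hq.eq_zero β hβ, zero_div]⟩
  have hω₁ (x : X) : scaledWt q c (α ++ [x]) = q (α ++ [x]) / c₁ := by simp [scaledWt, c₁]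
  have hω₂ (x y : X) : scaledWt q c (α ++ [x, y]) = q (α ++ [x, y]) / c₂ := by
    simp [scaledWt, c₂]
  have hposω (x : X) (hx : x ∈ Cnt L α) : 0 < scaledWt q c (α ++ [x]) :=
    hω₁ x ▸ div_pos (hpos x hx) h₁
  have hs := hScale.imp_left fun h => (one_le_div (mul_pos h₀ h₂)).2 h
  have hle := mul_sq_sum_le_sum_mul_sq (fun C hC => bClass_le_one hSyn hC) hs
    fun C => ∑ x ∈ C, scaledWt q c (α ++ [x]) * u x
  have hid := scaledWt_mul_sum_mul_sum_origin hL hω hposω hLog hFew u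
  rw [sum_Par_sum hL] at hle
  have hscaled : scaledWt q c α *
      ∑ x ∈ Cnt L α, u x * ∑ z, scaledWt q c (α ++ [x, z]) * u (origin L α x z) ≤
        c₁ ^ 2 / (c₀ * c₂) * (∑ x ∈ Cnt L α, scaledWt q c (α ++ [x]) * u x) ^ 2 := by
    linarith
  have hα : scaledWt q c α = q α / c₀ := rfl
  simp only [hα, hω₁, hω₂, div_mul_eq_mul_div, ← Finset.sum_div, mul_div_assoc'] at hscaled
  field_simp at hscaled
  exact hscaled

theorem hyperbolic_atlasMatrix_of_mul_sum_le_sq (hL : Hereditary L) (hq : IsWeight L q)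
    (hcont : ContInvAt L q α) (hα : 0 < q α)
    (hle : ∀ u : X → ℝ,
      q α * ∑ x ∈ Cnt L α, u x * ∑ z, q (α ++ [x, z]) * u (origin L α x z) ≤
        (∑ x ∈ Cnt L α, q (α ++ [x]) * u x) ^ 2) :
    Hyperbolic (atlasMatrix L q α) := by
  refine .of_nonpos_on_orthogonal (atlasMatrix_isSymm hL hq hcont) (mixVec 0)
    fun v hv => ?_
  rw [dotProduct_atlasMatrix_mulVec_mixVec, mixWt_zero] at hv
  have hcnt (f : X → ℝ) (hf : ∀ x ∉ Cnt L α, f x = 0) : ∑ x ∈ Cnt L α, f x = ∑ x, f x :=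
    Finset.sum_subset (Finset.subset_univ _) fun x _ hx => hf x hx
  have hquad := hle fun x => v (some x)
  rw [hcnt _ fun x hx => ?_, hcnt _ fun x hx => ?_] at hquad
  · have hform : v ⬝ᵥ atlasMatrix L q α *ᵥ v =
        v none * ∑ x, q (α ++ [x]) * v (some x) +
          ∑ x, v (some x) * ∑ z, q (α ++ [x, z]) * v (some (origin L α x z)) := by
      rw [dotProduct_atlasMatrix_mulVec, hv, mul_zero, zero_add, Finset.mul_sum,
        ← Finset.sum_add_distrib]
      refine Finset.sum_congr rfl fun x _ => ?_
      simp only [pairing, pullback, Option.map_none, Option.map_some, List.append_assoc,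
        List.singleton_append]
      ring
    rw [pairing] at hv
    rw [hform]
    refine nonpos_of_mul_nonpos_right ?_ hα
    linear_combination hquad + (∑ x, q (α ++ [x]) * v (some x)) * hv
  · rw [hq.eq_zero _ (mt mem_Cnt.2 hx), zero_mul]
  · have hzero (z : X) : q (α ++ [x, z]) = 0 := hq.eq_zero _ (mt hL.mem_Cnt hx)
    simp [hzero]

end LogModular

end Grd

/-- **Log-concavity for interval greedoids** (first main theorem).  Let `G = (X, L)` be an
interval greedoid of rank `m`, let `1 ≤ k < m`, and let `q : L → ℝ_{>0}` be a
`k`-admissible weight function (extended by `0` off `L`), with scale sequence `c`.  Then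
`L_q(k)² ≥ L_q(k-1)·L_q(k+1)`. -/
theorem interval_greedoid_log_concavity
    (L : List X → Prop) (m : ℕ)
    -- `G = (X, L)` is an interval greedoid of rank `m`:
    (h_empty : L [])
    (h_simple : ∀ α : List X, L α → α.Nodup)
    (h_hered : ∀ α β : List X, L (α ++ β) → L α)
    (h_exch : ∀ α β : List X, L α → L β → β.length < α.length → ∃ x ∈ α, L (β ++ [x]))
    (h_interval : ∀ (α β γ : List X) (x : X),
      L (α ++ [x]) → L (α ++ β ++ γ ++ [x]) → L (α ++ β ++ [x]))
    (h_rk_le : ∀ α : List X, L α → α.length ≤ m)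
    (h_rk_ex : ∃ α : List X, L α ∧ α.length = m)
    (k : ℕ) (hk1 : 1 ≤ k) (hk2 : k < m)
    -- `q` is a positive weight function on `L`, extended by zero off `L`:
    (q : List X → ℝ)
    (hq_pos : ∀ α : List X, L α → 0 < q α)
    (hq_zero : ∀ α : List X, ¬ L α → q α = 0)
    -- the scale sequence:
    (c : ℕ → ℝ) (hc : ∀ i, 0 < c i)
    -- `k`-admissibility: the following hold for all `α ∈ L` with `|α| < k`.
    -- (ContInv): continuation invariance
    (hContInv : ∀ α : List X, L α → α.length < k →
      ∀ x ∈ Grd.Cnt L α, ∀ y ∈ Grd.Cnt L α, ∀ β : List X,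
        q (α ++ [x, y] ++ β) = q (α ++ [y, x] ++ β))
    -- (PAMon): passive-active monotonicity
    (hPAMon : ∀ α : List X, L α → α.length < k →
      ∀ x ∈ Grd.Cnt L α, ∀ y ∈ Grd.Cnt L α, x ≠ y → ∀ r : ℕ,
        (∑ z ∈ Grd.Act L α x y, ∑ β ∈ wordsLen X r, q (α ++ [x, y, z] ++ β)) ≤
          (∑ z ∈ Grd.Pas L α x y, ∑ β ∈ wordsLen X r, q (α ++ [x, y, z] ++ β)))
    -- (LogMod): log-modularity
    (hLogMod : ∀ α : List X, L α → α.length < k →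
      ∀ x ∈ Grd.Cnt L α, ∀ y ∈ Grd.Cnt L α, L (α ++ [x, y]) →
        Grd.scaledWt q c (α ++ [x]) * Grd.scaledWt q c (α ++ [y]) =
          Grd.scaledWt q c α * Grd.scaledWt q c (α ++ [x, y]))
    -- (FewDes): few descendants
    (hFewDes : ∀ α : List X, L α → α.length < k →
      ∀ C ∈ Grd.Par L α, 2 ≤ C.card → ∀ x ∈ C, Grd.Des L α x = ∅)
    -- (SynMon): syntactic monotonicity
    (hSynMon : ∀ α : List X, L α → α.length < k →
      ∀ x ∈ Grd.Cnt L α,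
        (∑ y ∈ Grd.Des L α x, Grd.scaledWt q c α * Grd.scaledWt q c (α ++ [x, y])) ≤
          (Grd.scaledWt q c (α ++ [x])) ^ 2)
    -- (ScaleMon): scale monotonicity
    (hScaleMon : ∀ α : List X, L α → α.length < k →
      c α.length * c (α.length + 2) ≤ (c (α.length + 1)) ^ 2 ∨
        ((∀ C ∈ Grd.Par L α, Grd.bClass L q c α C < 1) ∧
          (1 - (c (α.length + 1)) ^ 2 / (c α.length * c (α.length + 2))) *
              (∑ C ∈ Grd.Par L α, 1 / (1 - Grd.bClass L q c α C)) ≤ 1)) :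
    Grd.Lq L q (k - 1) * Grd.Lq L q (k + 1) ≤ (Grd.Lq L q k) ^ 2 := by
  obtain ⟨r, rfl⟩ : ∃ r, k = r + 1 := ⟨k - 1, by omega⟩
  obtain ⟨γ, hγ, rfl⟩ := h_rk_ex
  have hG : Grd.IsGreedoid L := ⟨h_empty, h_simple, h_hered, h_exch⟩
  have hq : Grd.IsWeight L q :=
    ⟨fun α => (em (L α)).elim (fun h => (hq_pos α h).le) fun h => (hq_zero α h).ge, hq_zero⟩
  have hPA (α) (hα : L α) (hαk : α.length < r + 1) (j : ℕ) :
      Grd.PAMonAt L (Grd.cntSum^[j] q) α := fun x hx y hy hxy => by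
    simpa only [Grd.iterate_cntSum] using hPAMon α hα hαk x hx y hy hxy j
  have hpos (j) (α) (hα : L α) (hj : α.length + j < r + 1) : 0 < Grd.cntSum^[j] q α :=
    Grd.iterate_cntSum_pos hG hq hq_pos hγ hα (by omega)
  have hbase (α) (hα : L α) (hαk : α.length < r + 1) :
      Hyperbolic (Grd.atlasMatrix L q α) :=
    Grd.hyperbolic_atlasMatrix_of_mul_sum_le_sq h_hered hq (hContInv α hα hαk) (hq_pos α hα)
      (Grd.mul_sum_mul_sum_origin_le_sq hG hq (fun x hx => hq_pos _ (Grd.mem_Cnt.1 hx)) hc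
        (hLogMod α hα hαk) (hFewDes α hα hαk) (hSynMon α hα hαk) (hScaleMon α hα hαk))
  have hyp : Hyperbolic (Grd.atlasMatrix L (Grd.cntSum^[r] q) []) :=
    Grd.hyperbolic_atlasMatrix_iterate_cntSum h_hered h_interval hq hContInv hPA hpos hbase
      h_empty (by simp)
  simp only [Grd.Lq_eq_iterate_cntSum hq, Nat.add_sub_cancel, Function.iterate_succ_apply']
  exact Grd.mul_cntSum_cntSum_le_sq hyp (hpos r [] h_empty (by simp))
end
end
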